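/- Let d ≥ 2 and n > d + 1 be integers and define K = (1 + d/(2n)) · (1/sqrt(2n)) · ∫_0^∞ [ 1 − ( γ(d/2, y) / Γ(d/2) )^n ] / sqrt(y) dy − sqrt(d/n), where γ(s, y) = ∫_0^y t^{s−1} e^{−t} dt is the lower incomplete gamma function and Γ is the gamma function. Suppose ε > 0 satisfies K < ε. If U is a random n×d matrix drawn from the symmetric measure on the Stiefel manifold St(n,d), with rows u_1,…,u_n, then the probability that max_{1 ≤ i ≤ n} ‖u_i‖ − sqrt(d/n) ≥ ε is at most exp( − (n−2)(ε − K)² / 8 ). -/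

import Mathlib

open MeasureTheory ProbabilityTheory Real Matrix

noncomputable section

/-- Matrices over a measurable space carry the (Borel) product measurable structure. -/
instance matrixMeasurableSpace {m n α : Type*} [MeasurableSpace α] :
    MeasurableSpace (Matrix m n α) :=
  inferInstanceAs (MeasurableSpace (m → n → α))

/-- The Euclidean norm of the `i`-th row of an `n × d` real matrix. -/
def rowNorm {n d : ℕ} (U : Matrix (Fin n) (Fin d) ℝ) (i : Fin n) : ℝ :=
  Real.sqrt (∑ j : Fin d, (U i j) ^ 2)

/-- The lower incomplete gamma function `γ(s, y) = ∫_0^y t^{s-1} e^{-t} dt`. -/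
def lowerIncGamma (s y : ℝ) : ℝ :=
  ∫ t in (0 : ℝ)..y, t ^ (s - 1) * Real.exp (-t)

/-- The exact expectation-type constant
`K = (1 + d/(2n)) · (1/√(2n)) · ∫_0^∞ (1 - (γ(d/2, y)/Γ(d/2))^n)/√y dy − √(d/n)`. -/
def stiefelK (d n : ℕ) : ℝ :=
  (1 + (d : ℝ) / (2 * n)) * (1 / Real.sqrt (2 * n)) *
      (∫ y in Set.Ioi (0 : ℝ),
        (1 - (lowerIncGamma ((d : ℝ) / 2) y / Real.Gamma ((d : ℝ) / 2)) ^ n) / Real.sqrt y)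
    - Real.sqrt ((d : ℝ) / n)

/-- unnormalised density of the row norm -/
def phi (d k : ℕ) (x : ℝ) : ℝ := x ^ (d - 1) * (1 - x ^ 2) ^ (((k : ℝ) - 2) / 2)

lemma phi_cont (d k : ℕ) (hk : 2 ≤ k) : Continuous (phi d k) := by
  have : (2:ℝ) ≤ k := by exact_mod_cast hk
  unfold phi
  refine (continuous_pow _).mul ((by fun_prop : Continuous fun x : ℝ => 1 - x ^ 2).rpow_const ?_)
  intro x; right; linarith

lemma phi_nonneg (d k : ℕ) {x : ℝ} (h0 : 0 ≤ x) (h1 : x ≤ 1) : 0 ≤ phi d k x := by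
  unfold phi
  have : 0 ≤ 1 - x ^ 2 := by nlinarith
  positivity

lemma phi_pos (d k : ℕ) {x : ℝ} (h0 : 0 < x) (h1 : x < 1) : 0 < phi d k x := by
  unfold phi
  have : 0 < 1 - x ^ 2 := by nlinarith
  positivity

lemma phi_int (d k : ℕ) (hk : 2 ≤ k) (a b : ℝ) : IntervalIntegrable (phi d k) volume a b :=
  (phi_cont d k hk).intervalIntegrable a b

lemma phi_logconc (d k : ℕ) (hk : 2 ≤ k) {x y u : ℝ} (hx : 0 ≤ x) (hxy : x ≤ y) (hu : 0 ≤ u)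
    (h1 : y + u ≤ 1) : phi d k x * phi d k (y + u) ≤ phi d k y * phi d k (x + u) := by
  have hk' : (2:ℝ) ≤ k := by exact_mod_cast hk
  unfold phi
  have e1 : 0 ≤ 1 - x ^ 2 := by nlinarith
  have e2 : 0 ≤ 1 - y ^ 2 := by nlinarith
  have e3 : 0 ≤ 1 - (x + u) ^ 2 := by nlinarith
  have e4 : 0 ≤ 1 - (y + u) ^ 2 := by nlinarith
  have p1 : x ^ (d-1) * (y + u) ^ (d-1) ≤ y ^ (d-1) * (x + u) ^ (d-1) := by
    rw [← mul_pow, ← mul_pow]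
    exact pow_le_pow_left₀ (by nlinarith [mul_nonneg hx (by linarith : 0 ≤ y+u)]) (by nlinarith) _
  have p2 : (1 - x ^ 2) ^ (((k : ℝ) - 2) / 2) * (1 - (y + u) ^ 2) ^ (((k : ℝ) - 2) / 2) ≤
      (1 - y ^ 2) ^ (((k : ℝ) - 2) / 2) * (1 - (x + u) ^ 2) ^ (((k : ℝ) - 2) / 2) := by
    rw [← Real.mul_rpow e1 e4, ← Real.mul_rpow e2 e3]
    refine Real.rpow_le_rpow (mul_nonneg e1 e4) ?_ (by linarith)
    have a1 : (1-x)*(1-(y+u)) ≤ (1-y)*(1-(x+u)) := by nlinarith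
    have a2 : (1+x)*(1+(y+u)) ≤ (1+y)*(1+(x+u)) := by nlinarith
    have a3 : 0 ≤ (1-x)*(1-(y+u)) := mul_nonneg (by linarith) (by linarith)
    have a4 : 0 ≤ (1+x)*(1+(y+u)) := mul_nonneg (by linarith) (by linarith)
    have := mul_le_mul a1 a2 a4 (a3.trans a1)
    nlinarith
  have hy : 0 ≤ y := hx.trans hxy
  have := mul_le_mul p1 p2 (by positivity) (by positivity)
  nlinarith [this]

/-- past the mode: gaussian decay -/
lemma phi_decay (d k : ℕ) (hd : 1 ≤ d) (hk : 2 ≤ k) {x t : ℝ} (hx : 0 < x) (ht : 0 ≤ t)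
    (h1 : x + t ≤ 1) (hx1 : x < 1)
    (hA : ((d:ℝ) - 1) * (1 - x ^ 2) ≤ ((k:ℝ) - 2) * x ^ 2) :
    phi d k (x + t) ≤ Real.exp (-(((d:ℝ) + k - 3) * t ^ 2 / 2)) * phi d k x := by
  have hk' : (2:ℝ) ≤ k := by exact_mod_cast hk
  have hd' : (1:ℝ) ≤ d := by exact_mod_cast hd
  have e1 : 0 < 1 - x ^ 2 := by nlinarith
  have e3 : 0 ≤ 1 - (x + t) ^ 2 := by nlinarith
  have b1 : (x + t) ^ (d-1) ≤ Real.exp (((d:ℝ) - 1) * (t / x)) * x ^ (d-1) := by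
    have : x + t ≤ x * Real.exp (t / x) := by
      have := Real.add_one_le_exp (t/x)
      calc x + t = x * (t / x + 1) := by field_simp; ring
        _ ≤ _ := by gcongr
    calc (x+t)^(d-1) ≤ (x * Real.exp (t / x)) ^ (d-1) := pow_le_pow_left₀ (by linarith) this _
      _ = _ := by
        rw [mul_pow, ← Real.exp_nat_mul, mul_comm]
        push_cast [Nat.cast_sub hd]; rfl
  have b2 : (1 - (x+t)^2) ^ (((k : ℝ) - 2) / 2) ≤
      Real.exp (-((((k : ℝ) - 2) / 2) * ((2*x*t+t^2)/(1-x^2)))) * (1 - x^2) ^ (((k : ℝ) - 2) / 2) := by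
    have : 1 - (x+t)^2 ≤ Real.exp (-((2*x*t+t^2)/(1-x^2))) * (1 - x^2) := by
      have := Real.add_one_le_exp (-((2*x*t+t^2)/(1-x^2)))
      calc 1 - (x+t)^2 = (-((2*x*t+t^2)/(1-x^2)) + 1) * (1 - x^2) := by field_simp; ring
        _ ≤ _ := by gcongr
    calc _ ≤ (Real.exp (-((2*x*t+t^2)/(1-x^2))) * (1 - x^2)) ^ (((k : ℝ) - 2) / 2) :=
          Real.rpow_le_rpow e3 this (by linarith)
      _ = _ := by
        rw [Real.mul_rpow (Real.exp_nonneg _) e1.le, ← Real.exp_mul]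
        congr 2; ring
  have b3 := mul_le_mul b1 b2 (by positivity) (by positivity)
  unfold phi
  refine b3.trans ?_
  rw [mul_mul_mul_comm, ← Real.exp_add]
  refine mul_le_mul_of_nonneg_right (Real.exp_le_exp.2 ?_) (by positivity)
  have c1 : ((d:ℝ) - 1) * (t / x) ≤ (((k : ℝ) - 2) / 2) * ((2*x*t)/(1-x^2)) := by
    rw [← mul_div_assoc, ← mul_div_assoc, div_le_div_iff₀ hx e1]
    nlinarith
  have c2 : ((d:ℝ) + k - 3) * t ^ 2 / 2 ≤ (((k : ℝ) - 2) / 2) * (t^2/(1-x^2)) := by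
    rw [← mul_div_assoc, div_le_div_iff₀ two_pos e1]
    nlinarith [sq_nonneg t]
  rw [add_div]
  linarith

/-- before the mode: monotone -/
lemma phi_mono (d k : ℕ) (hd : 1 ≤ d) (hk : 2 ≤ k) {x y : ℝ} (hx : 0 ≤ x) (hxy : x ≤ y)
    (hy : 0 < y) (hy1 : y < 1)
    (hA : ((k:ℝ) - 2) * y ^ 2 ≤ ((d:ℝ) - 1) * (1 - y ^ 2)) :
    phi d k x ≤ phi d k y := by
  have hk' : (2:ℝ) ≤ k := by exact_mod_cast hk
  have hd' : (1:ℝ) ≤ d := by exact_mod_cast hd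
  have e1 : 0 < 1 - y ^ 2 := by nlinarith
  have e3 : 0 ≤ 1 - x ^ 2 := by nlinarith
  have b1 : x ^ (d-1) ≤ Real.exp (-(((d:ℝ) - 1) * ((y - x) / y))) * y ^ (d-1) := by
    have : x ≤ y * Real.exp (-((y - x) / y)) := by
      have := Real.add_one_le_exp (-((y - x) / y))
      calc x = y * (-((y - x) / y) + 1) := by field_simp; ring
        _ ≤ _ := by gcongr
    calc x^(d-1) ≤ (y * Real.exp (-((y - x) / y))) ^ (d-1) := pow_le_pow_left₀ hx this _
      _ = _ := by
        rw [mul_pow, ← Real.exp_nat_mul, mul_comm]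
        push_cast [Nat.cast_sub hd]; congr 2; ring
  have b2 : (1 - x^2) ^ (((k : ℝ) - 2) / 2) ≤
      Real.exp ((((k : ℝ) - 2) / 2) * ((y^2-x^2)/(1-y^2))) * (1 - y^2) ^ (((k : ℝ) - 2) / 2) := by
    have : 1 - x^2 ≤ Real.exp ((y^2-x^2)/(1-y^2)) * (1 - y^2) := by
      have := Real.add_one_le_exp ((y^2-x^2)/(1-y^2))
      calc 1 - x^2 = ((y^2-x^2)/(1-y^2) + 1) * (1 - y^2) := by field_simp; ring
        _ ≤ _ := by gcongr
    calc _ ≤ (Real.exp ((y^2-x^2)/(1-y^2)) * (1 - y^2)) ^ (((k : ℝ) - 2) / 2) :=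
          Real.rpow_le_rpow e3 this (by linarith)
      _ = _ := by
        rw [Real.mul_rpow (Real.exp_nonneg _) e1.le, ← Real.exp_mul]
        congr 2; ring
  have b3 := mul_le_mul b1 b2 (by positivity) (by positivity)
  unfold phi
  refine b3.trans ?_
  rw [mul_mul_mul_comm, ← Real.exp_add]
  refine mul_le_of_le_one_left (by positivity) (Real.exp_le_one_iff.2 ?_)
  have c1 : (((k : ℝ) - 2) / 2) * ((y^2-x^2)/(1-y^2)) ≤ ((d:ℝ) - 1) * ((y - x) / y) := by
    rw [← mul_div_assoc, ← mul_div_assoc, div_le_div_iff₀ e1 hy]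
    have h1 : (((k:ℝ) - 2)/2 * (y + x) * y) ≤ ((d:ℝ) - 1) * (1 - y ^ 2) := by
      refine le_trans ?_ hA
      have : (y + x) * y ≤ 2 * y^2 := by nlinarith
      nlinarith
    nlinarith [mul_le_mul_of_nonneg_right h1 (sub_nonneg.2 hxy)]
  linarith

lemma phi_hasDeriv (d k : ℕ) (hk : 2 ≤ k) (a x : ℝ) :
    HasDerivAt (fun y => ∫ u in a..y, phi d k u) (phi d k x) x :=
  intervalIntegral.integral_hasDerivAt_right (phi_int d k hk _ _)
    (phi_cont d k hk).stronglyMeasurable.stronglyMeasurableAtFilter (phi_cont d k hk).continuousAt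

lemma phi_hasDeriv' (d k : ℕ) (hk : 2 ≤ k) (b x : ℝ) :
    HasDerivAt (fun y => ∫ u in y..b, phi d k u) (-phi d k x) x :=
  intervalIntegral.integral_hasDerivAt_left (phi_int d k hk _ _)
    (phi_cont d k hk).stronglyMeasurable.stronglyMeasurableAtFilter (phi_cont d k hk).continuousAt

lemma phi_integral_pos (d k : ℕ) (hk : 2 ≤ k) {a b : ℝ} (h0 : 0 ≤ a) (hab : a < b) (h1 : b ≤ 1) :
    0 < ∫ u in a..b, phi d k u :=
  intervalIntegral.intervalIntegral_pos_of_pos_on (phi_int d k hk _ _)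
    (fun x hx => phi_pos d k (h0.trans_lt hx.1) (hx.2.trans_le h1)) hab

lemma phi_integral_nonneg (d k : ℕ) {a b : ℝ} (h0 : 0 ≤ a) (hab : a ≤ b) (h1 : b ≤ 1) :
    0 ≤ ∫ u in a..b, phi d k u :=
  intervalIntegral.integral_nonneg hab
    (fun x hx => phi_nonneg d k (h0.trans hx.1) (hx.2.trans h1))

lemma phi_tail_mono (d k : ℕ) (hk : 2 ≤ k) {x y : ℝ} (hx : 0 ≤ x) (hxy : x ≤ y) (hy : y ≤ 1) :
    phi d k x * (∫ u in y..1, phi d k u) ≤ phi d k y * (∫ u in x..1, phi d k u) := by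
  have h1 : (∫ u in y..1, phi d k u) = ∫ u in (0:ℝ)..(1-y), phi d k (y + u) := by
    rw [intervalIntegral.integral_comp_add_left (phi d k) y]; simp
  have h2 : (∫ u in (0:ℝ)..(1-y), phi d k (x + u)) ≤ ∫ u in x..1, phi d k u := by
    rw [intervalIntegral.integral_comp_add_left (phi d k) x, add_zero]
    rw [← intervalIntegral.integral_add_adjacent_intervals (phi_int d k hk x (x+(1-y)))
      (phi_int d k hk (x+(1-y)) 1)]
    have := phi_integral_nonneg d k (a := x+(1-y)) (b := 1) (by linarith) (by linarith) le_rfl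
    linarith
  refine le_trans ?_ (mul_le_mul_of_nonneg_left h2 (phi_nonneg d k (hx.trans hxy) hy))
  rw [h1, ← intervalIntegral.integral_const_mul, ← intervalIntegral.integral_const_mul]
  have c := phi_cont d k hk
  refine intervalIntegral.integral_mono_on (by linarith) ?_ ?_ ?_
  · exact (Continuous.intervalIntegrable (by fun_prop) _ _)
  · exact (Continuous.intervalIntegrable (by fun_prop) _ _)
  · intro u hu
    exact phi_logconc d k hk hx hxy hu.1 (by linarith [hu.2])

lemma phi_head_mono (d k : ℕ) (hk : 2 ≤ k) {x y : ℝ} (hx : 0 ≤ x) (hxy : x ≤ y) (hy : y ≤ 1) :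
    phi d k y * (∫ u in (0:ℝ)..x, phi d k u) ≤ phi d k x * (∫ u in (0:ℝ)..y, phi d k u) := by
  have h2 : (∫ u in (0:ℝ)..x, phi d k (u + (y - x))) ≤ ∫ u in (0:ℝ)..y, phi d k u := by
    rw [intervalIntegral.integral_comp_add_right (phi d k) (y-x)]
    rw [← intervalIntegral.integral_add_adjacent_intervals (phi_int d k hk 0 (y-x))
      (phi_int d k hk (y-x) y)]
    have := phi_integral_nonneg d k (a := 0) (b := y-x) (by linarith) (by linarith) (by linarith)
    rw [zero_add, add_sub_cancel]
    linarith
  refine le_trans ?_ (mul_le_mul_of_nonneg_left h2 (phi_nonneg d k hx (hxy.trans hy)))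
  rw [← intervalIntegral.integral_const_mul, ← intervalIntegral.integral_const_mul]
  have c := phi_cont d k hk
  refine intervalIntegral.integral_mono_on (by linarith) ?_ ?_ ?_
  · exact (Continuous.intervalIntegrable (by fun_prop) _ _)
  · exact (Continuous.intervalIntegrable (by fun_prop) _ _)
  · intro u hu
    have := phi_logconc d k hk (x := u) (y := x) (u := y - x) hu.1 hu.2 (by linarith) (by linarith)
    rw [add_sub_cancel] at this
    linarith

/-- tail bound -/
lemma phi_tail (d k : ℕ) (hd : 2 ≤ d) (hk : 2 ≤ k) {M t : ℝ} (hM : 0 < M) (hM1 : M < 1) (ht : 0 ≤ t)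
    (hMt : M + t ≤ 1)
    (h : ((d:ℝ) + k) * (∫ u in M..1, phi d k u) ≤ ∫ u in (0:ℝ)..1, phi d k u) :
    ((d:ℝ) + k) * (∫ u in (M+t)..1, phi d k u) ≤
      Real.exp (-(((d:ℝ) + k - 2) * t ^ 2 / 8)) * ∫ u in (0:ℝ)..1, phi d k u := by
  have hk' : (2:ℝ) ≤ k := by exact_mod_cast hk
  have hd' : (2:ℝ) ≤ d := by exact_mod_cast hd
  have c := phi_cont d k hk
  suffices hs : (∫ u in (M+t)..1, phi d k u) ≤
      Real.exp (-(((d:ℝ) + k - 2) * t ^ 2 / 8)) * ∫ u in M..1, phi d k u by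
    calc ((d:ℝ) + k) * (∫ u in (M+t)..1, phi d k u) ≤
        ((d:ℝ) + k) * (Real.exp (-(((d:ℝ) + k - 2) * t ^ 2 / 8)) * ∫ u in M..1, phi d k u) := by
          gcongr
      _ = Real.exp (-(((d:ℝ) + k - 2) * t ^ 2 / 8)) * (((d:ℝ) + k) * ∫ u in M..1, phi d k u) := by
          ring
      _ ≤ _ := by gcongr
  have hT0 : 0 ≤ ∫ u in M..1, phi d k u := phi_integral_nonneg d k hM.le hM1.le le_rfl
  by_cases hA : ((d:ℝ) - 1) * (1 - M ^ 2) ≤ ((k:ℝ) - 2) * M ^ 2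
  · have h1 : (∫ u in (M+t)..1, phi d k u) = ∫ u in M..(1-t), phi d k (u + t) := by
      rw [intervalIntegral.integral_comp_add_right (phi d k) t]; simp
    have h2 : (∫ u in M..(1-t), phi d k (u + t)) ≤
        ∫ u in M..(1-t), Real.exp (-(((d:ℝ) + k - 3) * t ^ 2 / 2)) * phi d k u := by
      refine intervalIntegral.integral_mono_on_of_le_Ioo (by linarith) ?_ ?_ ?_
      · exact (Continuous.intervalIntegrable (by fun_prop) _ _)
      · exact (Continuous.intervalIntegrable (by fun_prop) _ _)
      · intro u hu
        refine phi_decay d k (by omega) hk (hM.trans hu.1) ht (by linarith [hu.2])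
          (by linarith [hu.2]) ?_
        have : M^2 ≤ u^2 := by nlinarith [hu.1]
        nlinarith
    have h3 : (∫ u in M..(1-t), phi d k u) ≤ ∫ u in M..1, phi d k u := by
      rw [← intervalIntegral.integral_add_adjacent_intervals (phi_int d k hk M (1-t))
        (phi_int d k hk (1-t) 1)]
      have := phi_integral_nonneg d k (a := 1-t) (b := 1) (by linarith) (by linarith) le_rfl
      linarith
    rw [h1]
    refine h2.trans ?_
    rw [intervalIntegral.integral_const_mul]
    refine mul_le_mul ?_ h3 (phi_integral_nonneg d k hM.le (by linarith) (by linarith))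
      (Real.exp_nonneg _)
    apply Real.exp_le_exp.2
    have := sq_nonneg t
    nlinarith
  · push Not at hA
    -- hazard rate at M is at least n - 1
    set T := fun x => ∫ u in x..1, phi d k u with hT
    have hTM : 0 < T M := phi_integral_pos d k hk hM.le hM1 le_rfl
    have hz : ((d:ℝ) + k - 1) * T M ≤ phi d k M := by
      have h1 : (∫ u in (0:ℝ)..M, phi d k u) ≤ ∫ u in (0:ℝ)..M, phi d k M := by
        refine intervalIntegral.integral_mono_on hM.le (phi_int d k hk _ _) (by simp) ?_
        intro u hu
        exact phi_mono d k (by omega) hk hu.1 hu.2 hM hM1 hA.le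
      have h2 := intervalIntegral.integral_add_adjacent_intervals (phi_int d k hk 0 M)
        (phi_int d k hk M 1)
      rw [intervalIntegral.integral_const, smul_eq_mul, sub_zero] at h1
      have h3 : M * phi d k M ≤ phi d k M :=
        mul_le_of_le_one_left (phi_nonneg d k hM.le hM1.le) hM1.le
      simp only [hT]
      linarith
    have hy : ∀ y, M ≤ y → y ≤ 1 → ((d:ℝ) + k - 1) * T y ≤ phi d k y := by
      intro y h1 h2
      have h3 := phi_tail_mono d k hk hM.le h1 h2
      have h4 : 0 ≤ T y := phi_integral_nonneg d k (hM.le.trans h1) h2 le_rfl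
      have h5 : (((d:ℝ) + k - 1) * T y) * T M ≤ phi d k y * T M := by
        calc (((d:ℝ) + k - 1) * T y) * T M = (((d:ℝ) + k - 1) * T M) * T y := by ring
          _ ≤ phi d k M * T y := by gcongr
          _ ≤ _ := h3
      exact le_of_mul_le_mul_right h5 hTM
    have hanti : AntitoneOn (fun x => Real.exp (((d:ℝ) + k - 1) * x) * T x) (Set.Icc M 1) := by
      have hder : ∀ x, HasDerivAt (fun x => Real.exp (((d:ℝ) + k - 1) * x) * T x)
          (Real.exp (((d:ℝ) + k - 1) * x) * (((d:ℝ) + k - 1) * T x - phi d k x)) x := by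
        intro x
        have a1 := ((hasDerivAt_id x).const_mul ((d:ℝ) + k - 1)).exp
        have := a1.mul (phi_hasDeriv' d k hk 1 x)
        refine this.congr_deriv ?_
        simp only [id]; ring
      refine antitoneOn_of_deriv_nonpos (convex_Icc _ _)
        (fun x _ => (hder x).continuousAt.continuousWithinAt)
        (fun x _ => (hder x).differentiableAt.differentiableWithinAt) ?_
      intro x hx
      rw [interior_Icc] at hx
      rw [(hder x).deriv]
      have := hy x hx.1.le hx.2.le
      exact mul_nonpos_of_nonneg_of_nonpos (Real.exp_nonneg _) (by linarith)
    have h6 := hanti (Set.mem_Icc.2 ⟨le_rfl, hM1.le⟩) (Set.mem_Icc.2 ⟨by linarith, hMt⟩)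
      (by linarith : M ≤ M + t)
    simp only at h6
    have h7 : T (M+t) ≤ Real.exp (-(((d:ℝ) + k - 1) * t)) * T M := by
      have e : Real.exp (((d:ℝ) + k - 1) * (M + t)) = Real.exp (((d:ℝ) + k - 1) * M) *
        Real.exp (((d:ℝ) + k - 1) * t) := by rw [← Real.exp_add]; ring_nf
      rw [e, mul_assoc] at h6
      have := le_of_mul_le_mul_left h6 (Real.exp_pos _)
      rw [Real.exp_neg, inv_mul_eq_div, le_div_iff₀ (Real.exp_pos _)]
      linarith
    refine h7.trans (mul_le_mul_of_nonneg_right (Real.exp_le_exp.2 ?_) hTM.le)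
    nlinarith [mul_nonneg ht (by linarith : 0 ≤ 1 - t)]

def Fb (d k : ℕ) (r : ℝ) : ℝ := (∫ u in (0:ℝ)..(min r 1), phi d k u) / ∫ u in (0:ℝ)..1, phi d k u

lemma B_pos (d k : ℕ) (hk : 2 ≤ k) : 0 < ∫ u in (0:ℝ)..1, phi d k u :=
  phi_integral_pos d k hk le_rfl one_pos le_rfl

lemma Fb_cont (d k : ℕ) (hk : 2 ≤ k) : Continuous (Fb d k) := by
  unfold Fb
  refine Continuous.div_const ?_ _
  exact (intervalIntegral.continuous_primitive (fun a b => phi_int d k hk a b) 0).comp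
    (continuous_id.min continuous_const)

lemma Fb_nonneg (d k : ℕ) {r : ℝ} (hr : 0 ≤ r) : 0 ≤ Fb d k r :=
  div_nonneg (phi_integral_nonneg d k le_rfl (le_min hr zero_le_one) (min_le_right _ _))
    (phi_integral_nonneg d k le_rfl zero_le_one le_rfl)

lemma Fb_le_one (d k : ℕ) (hk : 2 ≤ k) {r : ℝ} (hr : 0 ≤ r) : Fb d k r ≤ 1 := by
  unfold Fb
  rw [div_le_one (B_pos d k hk),
    ← intervalIntegral.integral_add_adjacent_intervals (phi_int d k hk 0 (min r 1))
        (phi_int d k hk (min r 1) 1)]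
  have := phi_integral_nonneg d k (a := min r 1) (b := 1) (le_min hr zero_le_one)
    (min_le_right _ _) le_rfl
  linarith

/-- tangent bound from log-concavity -/
lemma Fb_tangent (d k : ℕ) (hk : 2 ≤ k) {M : ℝ} (hM : 0 < M) (hM1 : M < 1) :
    ∃ b : ℝ, 0 < b ∧ ∀ r, 0 ≤ r → r ≤ 1 → Fb d k r ≤ Fb d k M * Real.exp (b * (r - M)) := by
  set H := fun x => ∫ u in (0:ℝ)..x, phi d k u with hH
  have hHM : 0 < H M := phi_integral_pos d k hk le_rfl hM hM1.le
  refine ⟨phi d k M / H M, div_pos (phi_pos d k hM hM1) hHM, ?_⟩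
  set b := phi d k M / H M with hb
  have hder : ∀ x, HasDerivAt (fun x => Real.exp (-b * x) * H x)
      (Real.exp (-b * x) * (phi d k x - b * H x)) x := by
    intro x
    have a1 := ((hasDerivAt_id x).const_mul (-b)).exp
    have := a1.mul (phi_hasDeriv d k hk 0 x)
    refine this.congr_deriv ?_
    simp only [id]; ring
  have hanti : AntitoneOn (fun x => Real.exp (-b * x) * H x) (Set.Icc M 1) := by
    refine antitoneOn_of_deriv_nonpos (convex_Icc _ _)
      (fun x _ => (hder x).continuousAt.continuousWithinAt)
      (fun x _ => (hder x).differentiableAt.differentiableWithinAt) ?_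
    intro x hx
    rw [interior_Icc] at hx
    rw [(hder x).deriv]
    have := phi_head_mono d k hk hM.le hx.1.le hx.2.le
    refine mul_nonpos_of_nonneg_of_nonpos (Real.exp_nonneg _) ?_
    rw [hb, sub_nonpos, div_mul_eq_mul_div, le_div_iff₀ hHM]
    exact this
  have hmono : MonotoneOn (fun x => Real.exp (-b * x) * H x) (Set.Icc 0 M) := by
    refine monotoneOn_of_deriv_nonneg (convex_Icc _ _)
      (fun x _ => (hder x).continuousAt.continuousWithinAt)
      (fun x _ => (hder x).differentiableAt.differentiableWithinAt) ?_
    intro x hx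
    rw [interior_Icc] at hx
    rw [(hder x).deriv]
    have := phi_head_mono d k hk hx.1.le hx.2.le hM1.le
    refine mul_nonneg (Real.exp_nonneg _) ?_
    rw [hb, sub_nonneg, div_mul_eq_mul_div, div_le_iff₀ hHM]
    exact this
  intro r hr hr1
  have key : Real.exp (-b * r) * H r ≤ Real.exp (-b * M) * H M := by
    rcases le_total r M with h | h
    · exact hmono ⟨hr, h⟩ ⟨hM.le, le_rfl⟩ h
    · exact hanti ⟨le_rfl, hM1.le⟩ ⟨h, hr1⟩ h
  have key2 : H r ≤ H M * Real.exp (b * (r - M)) := by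
    have e : Real.exp (b * (r - M)) = Real.exp (-b * M) / Real.exp (-b * r) := by
      rw [← Real.exp_sub]; ring_nf
    rw [e, ← mul_div_assoc, le_div_iff₀ (Real.exp_pos _)]
    linarith
  unfold Fb
  rw [min_eq_left hr1, min_eq_left hM1.le, div_mul_eq_mul_div]
  exact div_le_div_of_nonneg_right key2 (B_pos d k hk).le

lemma Fb_mean (d k : ℕ) (hk : 2 ≤ k) {M : ℝ} (hM : 0 < M) (hM1 : M < 1)
    (h : ∫⁻ r in Set.Ioi (0:ℝ), ENNReal.ofReal (1 - Fb d k r ^ (d + k)) ≤ ENNReal.ofReal M) :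
    ((d:ℝ) + k) * (∫ u in M..1, phi d k u) ≤ ∫ u in (0:ℝ)..1, phi d k u := by
  have hk' : (2:ℝ) ≤ k := by exact_mod_cast hk
  have hd' : (0:ℝ) ≤ d := Nat.cast_nonneg d
  obtain ⟨b, hb, hbr⟩ := Fb_tangent d k hk hM hM1
  have hB := B_pos d k hk
  have hF : 0 < Fb d k M := by
    unfold Fb
    rw [min_eq_left hM1.le]
    exact div_pos (phi_integral_pos d k hk le_rfl hM hM1.le) hB
  have hF1 : Fb d k M ≤ 1 := Fb_le_one d k hk hM.le
  set N : ℝ := (d:ℝ) + k with hN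
  have hNpos : 0 < N := by linarith
  set r0 := M - Real.log (Fb d k M) / b with hr0
  have hr0M : M ≤ r0 := by
    have : Real.log (Fb d k M) / b ≤ 0 := div_nonpos_of_nonpos_of_nonneg
      (Real.log_nonpos hF.le hF1) hb.le
    linarith
  have hbr2 : ∀ r, 0 ≤ r → r ≤ 1 → Fb d k r ≤ Real.exp (b * (r - r0)) := by
    intro r h0 h1
    refine (hbr r h0 h1).trans_eq ?_
    nth_rewrite 1 [← Real.exp_log hF]
    rw [← Real.exp_add, hr0]
    congr 1
    field_simp
    ring
  have hr01 : r0 ≤ 1 := by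
    have := hbr2 1 zero_le_one le_rfl
    have e : Fb d k 1 = 1 := by unfold Fb; rw [min_self]; exact div_self hB.ne'
    rw [e] at this
    have h2 := Real.one_le_exp_iff.1 this
    have h3 := nonneg_of_mul_nonneg_right h2 hb
    linarith
  have hr00 : 0 < r0 := by linarith
  have i1 : (∫ r in (0:ℝ)..r0, (1 - Real.exp (N * b * (r - r0)))) =
      (r0 - 1/(N*b)) - (0 - Real.exp (N * b * (0 - r0)) / (N*b)) := by
    have hder : ∀ x, HasDerivAt (fun r => r - Real.exp (N * b * (r - r0)) / (N*b))
        (1 - Real.exp (N * b * (x - r0))) x := by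
      intro x
      have a1 := ((((hasDerivAt_id x).sub_const r0).const_mul (N*b)).exp).div_const (N*b)
      have := (hasDerivAt_id x).sub a1
      refine this.congr_deriv ?_
      simp only [id]
      field_simp
    rw [intervalIntegral.integral_eq_sub_of_hasDerivAt (fun x _ => hder x)]
    · simp
    · exact Continuous.intervalIntegrable (by fun_prop) _ _
  have i2 : ENNReal.ofReal (∫ r in (0:ℝ)..r0, (1 - Real.exp (N * b * (r - r0)))) ≤
      ENNReal.ofReal M := by
    refine le_trans ?_ h
    rw [intervalIntegral.integral_of_le hr00.le]
    rw [ofReal_integral_eq_lintegral_ofReal]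
    · refine le_trans ?_ (lintegral_mono_set (fun x hx => hx.1 : Set.Ioc (0:ℝ) r0 ⊆ Set.Ioi 0))
      refine setLIntegral_mono' measurableSet_Ioc ?_
      intro r hr
      refine ENNReal.ofReal_le_ofReal ?_
      have := pow_le_pow_left₀ (Fb_nonneg d k hr.1.le) (hbr2 r hr.1.le (hr.2.trans hr01)) (d+k)
      rw [← Real.exp_nat_mul] at this
      push_cast at this
      rw [mul_assoc N]
      linarith
    · have : Continuous fun r => (1 - Real.exp (N * b * (r - r0))) := by fun_prop
      exact (this.intervalIntegrable 0 r0).1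
    · refine (ae_restrict_iff' measurableSet_Ioc).2 (Filter.Eventually.of_forall ?_)
      intro r hr
      have : Real.exp (N * b * (r - r0)) ≤ 1 := Real.exp_le_one_iff.2
        (mul_nonpos_of_nonneg_of_nonpos (by positivity) (by linarith [hr.2]))
      simp only [Pi.zero_apply]; linarith
  have i3 := (ENNReal.ofReal_le_ofReal_iff hM.le).1 i2
  rw [i1] at i3
  have i4 : 0 ≤ Real.exp (N * b * (0 - r0)) / (N*b) := by positivity
  have i5 : -Real.log (Fb d k M) / b ≤ 1 / (N * b) := by
    rw [hr0] at i3; rw [neg_div]; linarith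
  have i6 : -(1/N) ≤ Real.log (Fb d k M) := by
    rw [div_le_div_iff₀ hb (by positivity)] at i5
    have : -Real.log (Fb d k M) * N ≤ 1 := by nlinarith
    rw [neg_le, ← neg_le_neg_iff] 
    rw [← le_div_iff₀ hNpos] at this
    linarith
  have i7 : 1 - 1/N ≤ Fb d k M := by
    have := (Real.le_log_iff_exp_le hF).1 i6
    have := Real.add_one_le_exp (-(1/N))
    linarith
  have i8 := intervalIntegral.integral_add_adjacent_intervals (phi_int d k hk 0 M)
        (phi_int d k hk M 1)
  unfold Fb at i7
  rw [min_eq_left hM1.le, le_div_iff₀ hB] at i7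
  have : (∫ u in M..1, phi d k u) ≤ (1/N) * ∫ u in (0:ℝ)..1, phi d k u := by linarith
  calc _ ≤ N * ((1/N) * ∫ u in (0:ℝ)..1, phi d k u) := by gcongr
    _ = _ := by field_simp

lemma cos_image : Real.cos '' (Set.Ioo 0 (π/2)) = Set.Ioo (0:ℝ) 1 := by
  ext x
  constructor
  · rintro ⟨θ, hθ, rfl⟩
    refine ⟨Real.cos_pos_of_mem_Ioo ⟨by linarith [hθ.1, Real.pi_pos], hθ.2⟩, ?_⟩
    have := Real.cos_lt_cos_of_nonneg_of_le_pi_div_two le_rfl hθ.2.le hθ.1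
    rwa [Real.cos_zero] at this
  · rintro ⟨h0, h1⟩
    exact ⟨Real.arccos x, ⟨Real.arccos_pos.2 h1, Real.arccos_lt_pi_div_two.2 h0⟩,
      Real.cos_arccos (by linarith) h1.le⟩

lemma lintegral_cos (g : ℝ → ENNReal) :
    ∫⁻ ρ in Set.Ioo (0:ℝ) 1, g ρ =
      ∫⁻ θ in Set.Ioo (0:ℝ) (π/2), ENNReal.ofReal (Real.sin θ) * g (Real.cos θ) := by
  rw [← cos_image, lintegral_image_eq_lintegral_abs_deriv_mul measurableSet_Ioo
    (fun x _ => (Real.hasDerivAt_cos x).hasDerivWithinAt)]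
  · refine setLIntegral_congr_fun measurableSet_Ioo ?_
    intro θ hθ
    have : 0 < Real.sin θ := Real.sin_pos_of_pos_of_lt_pi hθ.1 (by linarith [hθ.2, Real.pi_pos])
    simp only [abs_neg, abs_of_pos this]
  · have hs : Set.Ioo (0:ℝ) (π/2) ⊆ Set.Icc 0 π := fun x hx =>
      ⟨hx.1.le, by linarith [hx.2, Real.pi_pos]⟩
    exact Real.injOn_cos.mono hs

lemma polar_quadrant (Ψ : ℝ × ℝ → ENNReal) (hΨ : Measurable Ψ) :
    ∫⁻ p in Set.Ioi (0:ℝ), ∫⁻ q in Set.Ioi (0:ℝ), Ψ (p, q) =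
    ∫⁻ w in Set.Ioi (0:ℝ), ∫⁻ ρ in Set.Ioo (0:ℝ) 1,
      ENNReal.ofReal (w / √(1 - ρ^2)) * Ψ (w * ρ, w * √(1 - ρ^2)) := by
  have h1 : ∫⁻ p in Set.Ioi (0:ℝ), ∫⁻ q in Set.Ioi (0:ℝ), Ψ (p, q) =
      ∫⁻ z : ℝ × ℝ, (Set.Ioi (0:ℝ) ×ˢ Set.Ioi (0:ℝ)).indicator Ψ z := by
    rw [lintegral_indicator (measurableSet_Ioi.prod measurableSet_Ioi), Measure.volume_eq_prod,
      ← Measure.prod_restrict, lintegral_prod _ hΨ.aemeasurable]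
  have hm : Measurable ((Set.Ioi (0:ℝ) ×ˢ Set.Ioi (0:ℝ)).indicator Ψ) :=
    hΨ.indicator (measurableSet_Ioi.prod measurableSet_Ioi)
  rw [h1, ← lintegral_comp_polarCoord_symm, polarCoord_target, Measure.volume_eq_prod,
      ← Measure.prod_restrict, lintegral_prod]
  · refine setLIntegral_congr_fun measurableSet_Ioi ?_
    intro w hw
    have hw : 0 < w := hw
    simp only [polarCoord_symm_apply]
    rw [lintegral_cos]
    have hsub : Set.Ioo (0:ℝ) (π/2) ⊆ Set.Ioo (-π) π := by
      intro x hx; exact ⟨by linarith [hx.1, Real.pi_pos], by linarith [hx.2, Real.pi_pos]⟩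
    have e1 : ∀ θ ∈ Set.Ioo (-π) π, (Set.Ioi (0:ℝ) ×ˢ Set.Ioi (0:ℝ)).indicator Ψ
        (w * Real.cos θ, w * Real.sin θ) = (Set.Ioo (0:ℝ) (π/2)).indicator
        (fun θ => Ψ (w * Real.cos θ, w * Real.sin θ)) θ := by
      intro θ hθ
      by_cases h : θ ∈ Set.Ioo (0:ℝ) (π/2)
      · rw [Set.indicator_of_mem h, Set.indicator_of_mem]
        exact ⟨mul_pos hw (Real.cos_pos_of_mem_Ioo ⟨by linarith [h.1, Real.pi_pos], h.2⟩),
          mul_pos hw (Real.sin_pos_of_pos_of_lt_pi h.1 hθ.2)⟩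
      · rw [Set.indicator_of_notMem h, Set.indicator_of_notMem]
        rintro ⟨hc, hs⟩
        have hc : 0 < Real.cos θ := pos_of_mul_pos_right hc hw.le
        have hs : 0 < Real.sin θ := pos_of_mul_pos_right hs hw.le
        apply h
        constructor
        · by_contra h'
          push Not at h'
          have := Real.sin_nonpos_of_nonpos_of_neg_pi_le h' hθ.1.le
          linarith
        · by_contra h'
          push Not at h'
          have := Real.cos_nonpos_of_pi_div_two_le_of_le h' (by linarith [hθ.2, Real.pi_pos])
          linarith
    calc _ = ∫⁻ θ in Set.Ioo (-π) π, (Set.Ioo (0:ℝ) (π/2)).indicator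
          (fun θ => ENNReal.ofReal w * Ψ (w * Real.cos θ, w * Real.sin θ)) θ := by
          refine setLIntegral_congr_fun measurableSet_Ioo ?_
          intro θ hθ
          simp only [e1 θ hθ, smul_eq_mul]
          by_cases h : θ ∈ Set.Ioo (0:ℝ) (π/2)
          · simp only [Set.indicator_of_mem h]
          · simp only [Set.indicator_of_notMem h, mul_zero]
      _ = ∫⁻ θ in Set.Ioo (0:ℝ) (π/2), ENNReal.ofReal w * Ψ (w * Real.cos θ, w * Real.sin θ) := by
          rw [setLIntegral_indicator measurableSet_Ioo, Set.inter_eq_left.2 hsub]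
      _ = _ := by
          refine setLIntegral_congr_fun measurableSet_Ioo ?_
          intro θ hθ
          have : 0 < Real.sin θ := Real.sin_pos_of_pos_of_lt_pi hθ.1
            (by linarith [hθ.2, Real.pi_pos])
          simp only
          rw [show 1 - Real.cos θ ^ 2 = Real.sin θ ^ 2 by rw [Real.sin_sq], Real.sqrt_sq this.le,
            ← mul_assoc, ← ENNReal.ofReal_mul this.le, mul_div_cancel₀ _ this.ne']
  · refine Measurable.aemeasurable ?_
    have h2 : Measurable fun z : ℝ × ℝ => (polarCoord.symm z : ℝ × ℝ) := by
      simp only [polarCoord_symm_apply]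
      fun_prop
    have h3 : Measurable fun z : ℝ × ℝ => ENNReal.ofReal z.1 := by fun_prop
    exact h3.mul (hm.comp h2)

/-- weights -/
def wt (m : ℕ) (x : ℝ) : ℝ := x ^ (m - 1) * Real.exp (-(x^2/2))

lemma polar_weighted (d k : ℕ) (hd : 1 ≤ d) (hk : 1 ≤ k) (Φ : ℝ × ℝ → ENNReal) (hΦ : Measurable Φ) :
    ∫⁻ p in Set.Ioi (0:ℝ), ∫⁻ q in Set.Ioi (0:ℝ),
      ENNReal.ofReal (wt d p * wt k q) * Φ (p / √(p^2+q^2), √(p^2+q^2)) =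
    ∫⁻ w in Set.Ioi (0:ℝ), ∫⁻ ρ in Set.Ioo (0:ℝ) 1,
      ENNReal.ofReal (wt (d+k) w * phi d k ρ) * Φ (ρ, w) := by
  have := polar_quadrant (fun z => ENNReal.ofReal (wt d z.1 * wt k z.2) *
    Φ (z.1 / √(z.1^2+z.2^2), √(z.1^2+z.2^2))) (by
      have h1 : Measurable fun z : ℝ × ℝ => (z.1 / √(z.1^2+z.2^2), √(z.1^2+z.2^2)) := by fun_prop
      have h2 : Measurable fun z : ℝ × ℝ => ENNReal.ofReal (wt d z.1 * wt k z.2) := by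
        unfold wt; fun_prop
      exact h2.mul (hΦ.comp h1))
  simp only at this
  rw [this]
  refine setLIntegral_congr_fun measurableSet_Ioi ?_
  intro w hw
  have hw : 0 < w := hw
  refine setLIntegral_congr_fun measurableSet_Ioo ?_
  intro ρ hρ
  have e1 : 0 < 1 - ρ^2 := by nlinarith [hρ.1, hρ.2]
  have e2 : (w * ρ)^2 + (w * √(1 - ρ^2))^2 = w^2 := by
    rw [mul_pow, mul_pow, Real.sq_sqrt e1.le]; ring
  have e3 : 0 < √(1 - ρ^2) := Real.sqrt_pos.2 e1
  simp only
  rw [e2, Real.sqrt_sq hw.le, mul_div_cancel_left₀ _ hw.ne', ← mul_assoc,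
    ← ENNReal.ofReal_mul (by positivity)]
  congr 2
  unfold wt phi
  have e4 : (1 - ρ^2) ^ (((k:ℝ) - 2)/2) = √(1-ρ^2)^(k-1) / √(1-ρ^2) := by
    generalize 1 - ρ^2 = z at e1
    rw [Real.sqrt_eq_rpow, ← Real.rpow_natCast, ← Real.rpow_mul e1.le, ← Real.rpow_sub e1]
    congr 1
    push_cast [Nat.cast_sub hk]; ring
  rw [e4, mul_mul_mul_comm ((w * ρ)^(d-1)), ← Real.exp_add]
  have e5 : -((w * ρ) ^ 2 / 2) + -((w * √(1 - ρ ^ 2)) ^ 2 / 2) = -(w^2/2) := by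
    rw [← e2]; ring
  rw [e5]
  have e6 : w ^ (d + k - 1) = w ^ (d-1) * w ^ (k-1) * w := by
    rw [← pow_add, ← pow_succ]; congr 1; omega
  rw [e6, mul_pow, mul_pow]
  field_simp

def Jw (m : ℕ) : ℝ := ∫ x in Set.Ioi (0:ℝ), wt m x

lemma wt_cont (m : ℕ) : Continuous (wt m) := by unfold wt; fun_prop

lemma wt_nonneg (m : ℕ) {x : ℝ} (hx : 0 ≤ x) : 0 ≤ wt m x := by unfold wt; positivity

lemma wt_pos (m : ℕ) {x : ℝ} (hx : 0 < x) : 0 < wt m x := by unfold wt; positivity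

lemma wt_eq (m : ℕ) (hm : 1 ≤ m) (x : ℝ) :
    wt m x = x ^ ((m:ℝ) - 1) * Real.exp (-(1/2) * x ^ (2:ℝ)) := by
  unfold wt
  have : ((m:ℝ) - 1) = ((m - 1 : ℕ) : ℝ) := by push_cast [Nat.cast_sub hm]; ring
  rw [this, Real.rpow_natCast, Real.rpow_two]
  congr 2; ring

lemma wt_integrable (m : ℕ) (hm : 1 ≤ m) : IntegrableOn (wt m) (Set.Ioi 0) := by
  have hm' : (1:ℝ) ≤ m := by exact_mod_cast hm
  have := integrableOn_rpow_mul_exp_neg_mul_rpow (p := 2) (s := (m:ℝ)-1) (b := 1/2)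
    (by linarith) (by norm_num) (by norm_num)
  refine this.congr_fun ?_ measurableSet_Ioi
  intro x _
  exact (wt_eq m hm x).symm

lemma J_eq (m : ℕ) (hm : 1 ≤ m) : Jw m = 2 ^ ((m:ℝ)/2 - 1) * Real.Gamma ((m:ℝ)/2) := by
  have hm' : (1:ℝ) ≤ m := by exact_mod_cast hm
  unfold Jw
  simp_rw [wt_eq m hm]
  rw [integral_rpow_mul_exp_neg_mul_rpow (by norm_num) (by linarith) (by norm_num)]
  have : (1/2:ℝ) ^ (-((m:ℝ) - 1 + 1) / 2) = 2 ^ ((m:ℝ)/2) := by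
    rw [one_div, Real.inv_rpow (by norm_num), ← Real.rpow_neg (by norm_num)]
    congr 1; ring
  rw [this, Real.rpow_sub (by norm_num), Real.rpow_one]
  ring_nf

lemma J_pos (m : ℕ) (hm : 1 ≤ m) : 0 < Jw m := by
  have hm' : (1:ℝ) ≤ m := by exact_mod_cast hm
  rw [J_eq m hm]
  have := Real.Gamma_pos_of_pos (by linarith : 0 < (m:ℝ)/2)
  positivity

lemma J_rec (m : ℕ) (hm : 1 ≤ m) : Jw (m+2) = m * Jw m := by
  have hm' : (1:ℝ) ≤ m := by exact_mod_cast hm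
  rw [J_eq m hm, J_eq (m+2) (by omega)]
  have e : (((m + 2 : ℕ) : ℝ)) / 2 = (m:ℝ)/2 + 1 := by push_cast; ring
  rw [e, Real.Gamma_add_one (by linarith), add_sub_cancel_right,
    Real.rpow_sub (by norm_num), Real.rpow_one]
  ring

lemma J_lower (m : ℕ) (hm : 1 ≤ m) : √m * Jw (m+1) ≤ Jw (m+2) := by
  have hm' : (1:ℝ) ≤ m := by exact_mod_cast hm
  set c := √(m:ℝ) with hc
  have hc2 : c^2 = m := Real.sq_sqrt (by linarith)
  have i0 := wt_integrable m hm
  have i1 := wt_integrable (m+1) (by omega)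
  have i2 := wt_integrable (m+2) (by omega)
  have h : 0 ≤ ∫ x in Set.Ioi (0:ℝ), (wt (m+2) x - (2*c) * wt (m+1) x + c^2 * wt m x) := by
    refine setIntegral_nonneg measurableSet_Ioi ?_
    intro x hx
    have hx : 0 < x := hx
    have : (wt (m+2) x - (2*c) * wt (m+1) x + c^2 * wt m x) = wt m x * (x - c)^2 := by
      unfold wt
      obtain ⟨j, rfl⟩ : ∃ j, m = j + 1 := ⟨m-1, by omega⟩
      simp only [Nat.add_sub_cancel]
      rw [show j + 1 + 2 - 1 = j + 2 by omega]
      ring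
    rw [this]
    exact mul_nonneg (wt_nonneg m hx.le) (sq_nonneg _)
  have j1 : IntegrableOn (fun x => (2*c) * wt (m+1) x) (Set.Ioi 0) := i1.const_mul _
  have j0 : IntegrableOn (fun x => c^2 * wt m x) (Set.Ioi 0) := i0.const_mul _
  have j2 : IntegrableOn (fun x => wt (m+2) x - (2*c) * wt (m+1) x) (Set.Ioi 0) := i2.sub j1
  rw [integral_add j2 j0, integral_sub i2 j1,
    integral_const_mul, integral_const_mul] at h
  change 0 ≤ Jw (m+2) - 2*c* Jw (m+1) + c^2 * Jw m at h
  rw [hc2, ← J_rec m hm] at h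
  linarith

lemma lJ (m : ℕ) (hm : 1 ≤ m) :
    ∫⁻ x in Set.Ioi (0:ℝ), ENNReal.ofReal (wt m x) = ENNReal.ofReal (Jw m) := by
  unfold Jw
  rw [ofReal_integral_eq_lintegral_ofReal (wt_integrable m hm)]
  exact (ae_restrict_iff' measurableSet_Ioi).2 (Filter.Eventually.of_forall
    (fun x hx => wt_nonneg m (le_of_lt hx)))

lemma lphi (d k : ℕ) (hk : 2 ≤ k) {r : ℝ} (h0 : 0 ≤ r) :
    ∫⁻ ρ in Set.Ioo (0:ℝ) 1, ENNReal.ofReal (phi d k ρ) * (Set.Iic r).indicator 1 ρ =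
      ENNReal.ofReal ((∫ u in (0:ℝ)..1, phi d k u) * Fb d k r) := by
  have hm : 0 ≤ min r 1 := le_min h0 zero_le_one
  have e : (∫ u in (0:ℝ)..1, phi d k u) * Fb d k r = ∫ u in (0:ℝ)..(min r 1), phi d k u := by
    unfold Fb; rw [mul_div_cancel₀ _ (B_pos d k hk).ne']
  rw [e, intervalIntegral.integral_of_le hm, ofReal_integral_eq_lintegral_ofReal]
  · rw [Measure.restrict_congr_set (Ioo_ae_eq_Ioc (μ := volume) (a := (0:ℝ)) (b := 1))]
    have : ∀ x, ENNReal.ofReal (phi d k x) * (Set.Iic r).indicator 1 x =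
      (Set.Iic r).indicator (fun x => ENNReal.ofReal (phi d k x)) x := by
      intro x; by_cases h : x ∈ Set.Iic r <;> simp [h]
    simp_rw [this]
    rw [setLIntegral_indicator measurableSet_Iic]
    congr 2
    ext x; simp; tauto
  · exact (phi_int d k hk 0 (min r 1)).1
  · refine (ae_restrict_iff' measurableSet_Ioc).2 (Filter.Eventually.of_forall ?_)
    intro x hx
    exact phi_nonneg d k hx.1.le (hx.2.trans (min_le_right _ _))

def Fg (d : ℕ) (r : ℝ) : ℝ := (∫ x in (0:ℝ)..r, wt d x) / Jw d

lemma lwt (m : ℕ) {r : ℝ} (h0 : 0 ≤ r) :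
    ∫⁻ x in Set.Ioi (0:ℝ), ENNReal.ofReal (wt m x) * (Set.Iic r).indicator 1 x =
      ENNReal.ofReal (∫ x in (0:ℝ)..r, wt m x) := by
  rw [intervalIntegral.integral_of_le h0, ofReal_integral_eq_lintegral_ofReal]
  · have : ∀ x, ENNReal.ofReal (wt m x) * (Set.Iic r).indicator 1 x =
      (Set.Iic r).indicator (fun x => ENNReal.ofReal (wt m x)) x := by
      intro x; by_cases h : x ∈ Set.Iic r <;> simp [h]
    simp_rw [this]
    rw [setLIntegral_indicator measurableSet_Iic]
    congr 2
    ext x; simp [and_comm]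
  · exact ((wt_cont m).intervalIntegrable 0 r).1
  · refine (ae_restrict_iff' measurableSet_Ioc).2 (Filter.Eventually.of_forall ?_)
    intro x hx
    exact wt_nonneg m hx.1.le

lemma polar_lhs (d k : ℕ) (hk : 1 ≤ k) (f : ℝ → ENNReal) (hf : Measurable f) :
    ∫⁻ p in Set.Ioi (0:ℝ), ∫⁻ q in Set.Ioi (0:ℝ),
      ENNReal.ofReal (wt d p * wt k q) * f (p / √(p^2+q^2) * √(p^2+q^2)) =
    (∫⁻ p in Set.Ioi (0:ℝ), ENNReal.ofReal (wt d p) * f p) * ENNReal.ofReal (Jw k) := by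
  have hwd : Measurable (wt d) := (wt_cont d).measurable
  have hwk : Measurable (wt k) := (wt_cont k).measurable
  rw [← lintegral_mul_const _ (by fun_prop)]
  refine setLIntegral_congr_fun measurableSet_Ioi ?_
  intro p hp
  have hp : 0 < p := hp
  simp only
  rw [← lJ k hk, ← lintegral_const_mul _ (by fun_prop)]
  refine setLIntegral_congr_fun measurableSet_Ioi ?_
  intro q hq
  have hq : 0 < q := hq
  have : 0 < √(p^2+q^2) := by positivity
  simp only
  rw [div_mul_cancel₀ _ this.ne', ENNReal.ofReal_mul (wt_nonneg d hp.le)]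
  ring

lemma JJ (d k : ℕ) (hd : 1 ≤ d) (hk : 2 ≤ k) :
    Jw d * Jw k = Jw (d+k) * ∫ u in (0:ℝ)..1, phi d k u := by
  have h1 := polar_weighted d k hd (by omega) (fun _ => 1) measurable_const
  have h2 := polar_lhs d k (by omega) (fun _ => 1) measurable_const
  rw [h1] at h2
  simp only [mul_one] at h2
  rw [lJ d hd, ← ENNReal.ofReal_mul (J_pos d hd).le] at h2
  have hB := B_pos d k hk
  have h4 : ∫⁻ ρ in Set.Ioo (0:ℝ) 1, ENNReal.ofReal (phi d k ρ) =
      ENNReal.ofReal (∫ u in (0:ℝ)..1, phi d k u) := by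
    have h5 := lphi d k hk (r := 1) zero_le_one
    have : Fb d k 1 = 1 := by unfold Fb; rw [min_self]; exact div_self hB.ne'
    rw [this, mul_one] at h5
    rw [← h5]
    refine setLIntegral_congr_fun measurableSet_Ioo ?_
    intro ρ hρ
    have : ρ ∈ Set.Iic (1:ℝ) := hρ.2.le
    simp [this]
  have h3 : ∫⁻ w in Set.Ioi (0:ℝ), ∫⁻ ρ in Set.Ioo (0:ℝ) 1,
      ENNReal.ofReal (wt (d+k) w * phi d k ρ) = ENNReal.ofReal (Jw (d+k)) *
        ENNReal.ofReal (∫ u in (0:ℝ)..1, phi d k u) := by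
    have hwd : Measurable (wt (d+k)) := (wt_cont _).measurable
    have hph : Measurable (phi d k) := (phi_cont d k hk).measurable
    rw [← lJ (d+k) (by omega), ← lintegral_mul_const _ (by fun_prop)]
    refine setLIntegral_congr_fun measurableSet_Ioi ?_
    intro w hw
    simp only
    rw [← h4, ← lintegral_const_mul _ (by fun_prop)]
    refine setLIntegral_congr_fun measurableSet_Ioo ?_
    intro ρ hρ
    exact ENNReal.ofReal_mul (wt_nonneg _ (le_of_lt hw))
  rw [h3, ← ENNReal.ofReal_mul (J_pos _ (by omega)).le] at h2
  rw [ENNReal.ofReal_eq_ofReal_iff] at h2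
  · exact h2.symm
  · exact (mul_pos (J_pos _ (by omega)) hB).le
  · exact (mul_pos (J_pos _ hd) (J_pos _ (by omega))).le

lemma Fg_id (d k : ℕ) (hd : 1 ≤ d) (hk : 2 ≤ k) {r : ℝ} (hr : 0 ≤ r) :
    ENNReal.ofReal (Jw (d+k)) * ENNReal.ofReal (Fg d r) =
      ∫⁻ w in Set.Ioi (0:ℝ), ENNReal.ofReal (wt (d+k) w) * ENNReal.ofReal (Fb d k (r / w)) := by
  have hB := B_pos d k hk
  have hind : Measurable ((Set.Iic r).indicator (1 : ℝ → ENNReal)) :=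
    measurable_one.indicator measurableSet_Iic
  have h1 := polar_weighted d k hd (by omega) (fun z => (Set.Iic r).indicator 1 (z.1 * z.2))
    (hind.comp (by fun_prop))
  have h2 := polar_lhs d k (by omega) ((Set.Iic r).indicator 1) hind
  simp only at h1
  rw [h1, lwt d hr] at h2
  have hFg : (∫ x in (0:ℝ)..r, wt d x) = Jw d * Fg d r := by
    unfold Fg; rw [mul_div_cancel₀ _ (J_pos d hd).ne']
  have hFg0 : 0 ≤ Fg d r := div_nonneg (intervalIntegral.integral_nonneg hr
    (fun x hx => wt_nonneg d hx.1)) (J_pos d hd).le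
  have h3 : ∫⁻ w in Set.Ioi (0:ℝ), ∫⁻ ρ in Set.Ioo (0:ℝ) 1,
      ENNReal.ofReal (wt (d+k) w * phi d k ρ) * (Set.Iic r).indicator 1 (ρ * w) =
      (∫⁻ w in Set.Ioi (0:ℝ), ENNReal.ofReal (wt (d+k) w) * ENNReal.ofReal (Fb d k (r / w))) *
        ENNReal.ofReal (∫ u in (0:ℝ)..1, phi d k u) := by
    have hwd : Measurable (wt (d+k)) := (wt_cont _).measurable
    have hph : Measurable (phi d k) := (phi_cont d k hk).measurable
    have hFb : Measurable (Fb d k) := (Fb_cont d k hk).measurable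
    rw [← lintegral_mul_const _ (by fun_prop)]
    refine setLIntegral_congr_fun measurableSet_Ioi ?_
    intro w hw
    have hw : 0 < w := hw
    simp only
    rw [mul_assoc, ← ENNReal.ofReal_mul (Fb_nonneg d k (by positivity)), mul_comm (Fb d k _),
      ← lphi d k hk (by positivity : 0 ≤ r / w), ← lintegral_const_mul]
    · refine setLIntegral_congr_fun measurableSet_Ioo ?_
      intro ρ hρ
      simp only
      rw [ENNReal.ofReal_mul (wt_nonneg _ hw.le), mul_assoc]
      congr 2
      by_cases h : ρ * w ≤ r
      · have h' : ρ ≤ r / w := (le_div_iff₀ hw).2 h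
        simp [h, h']
      · have h' : ¬ ρ ≤ r / w := fun h'' => h ((le_div_iff₀ hw).1 h'')
        simp only [Set.indicator_apply, Set.mem_Iic, h, h', if_false]
    · exact hph.ennreal_ofReal.mul (measurable_one.indicator measurableSet_Iic)
  rw [h3, hFg, ← ENNReal.ofReal_mul (mul_nonneg (J_pos d hd).le hFg0),
    mul_right_comm, JJ d k hd hk, mul_right_comm, ENNReal.ofReal_mul
    (mul_nonneg (J_pos _ (by omega)).le hFg0), ENNReal.ofReal_mul (J_pos _ (by omega)).le] at h2
  exact ((ENNReal.mul_left_inj (by simpa using hB) ENNReal.ofReal_ne_top).1 h2).symm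

lemma lintegral_scale (g : ℝ → ENNReal) {w : ℝ} (hw : 0 < w) :
    ∫⁻ r in Set.Ioi (0:ℝ), g (r / w) = ENNReal.ofReal w * ∫⁻ x in Set.Ioi (0:ℝ), g x := by
  have him : (fun x => w * x) '' Set.Ioi (0:ℝ) = Set.Ioi 0 := by
    ext y; constructor
    · rintro ⟨x, hx, rfl⟩; exact mul_pos hw hx
    · intro hy; exact ⟨y / w, div_pos hy hw, by field_simp⟩
  have := lintegral_image_eq_lintegral_abs_deriv_mul (s := Set.Ioi (0:ℝ)) (f := fun x => w * x)
    (f' := fun _ => w) measurableSet_Ioi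
    (fun x _ => by simpa using ((hasDerivAt_id x).const_mul w).hasDerivWithinAt)
    (fun x _ y _ h => by simpa [hw.ne'] using h) (fun r => g (r / w))
  rw [him] at this
  rw [this, ← lintegral_const_mul' _ _ ENNReal.ofReal_ne_top, abs_of_pos hw]
  simp only [mul_div_cancel_left₀ _ hw.ne']

lemma Fg_nonneg (d : ℕ) (hd : 1 ≤ d) {r : ℝ} (hr : 0 ≤ r) : 0 ≤ Fg d r :=
  div_nonneg (intervalIntegral.integral_nonneg hr
    (fun x hx => wt_nonneg d hx.1)) (J_pos d hd).le

/-- Main comparison -/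
lemma mean_compare (d k : ℕ) (hd : 1 ≤ d) (hk : 2 ≤ k) :
    ENNReal.ofReal (Jw (d+k+1) / Jw (d+k)) *
      ∫⁻ r in Set.Ioi (0:ℝ), ENNReal.ofReal (1 - Fb d k r ^ (d+k)) ≤
    ∫⁻ r in Set.Ioi (0:ℝ), ENNReal.ofReal (1 - Fg d r ^ (d+k)) := by
  have hJ := J_pos (d+k) (by omega)
  have hwd : Measurable (wt (d+k)) := (wt_cont _).measurable
  have hFb : Measurable (Fb d k) := (Fb_cont d k hk).measurable
  set ν : Measure ℝ := (volume.restrict (Set.Ioi 0)).withDensity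
    (fun w => ENNReal.ofReal (wt (d+k) w / Jw (d+k))) with hν
  have hdens : Measurable (fun w => ENNReal.ofReal (wt (d+k) w / Jw (d+k))) := by fun_prop
  have hνl : ∀ f : ℝ → ENNReal, Measurable f → ∫⁻ w, f w ∂ν =
      (ENNReal.ofReal (Jw (d+k)))⁻¹ * ∫⁻ w in Set.Ioi 0, ENNReal.ofReal (wt (d+k) w) * f w := by
    intro f hf
    rw [hν, lintegral_withDensity_eq_lintegral_mul _ hdens hf,
      ← lintegral_const_mul _ (by fun_prop)]
    refine lintegral_congr fun w => ?_
    simp only [Pi.mul_apply]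
    rw [ENNReal.ofReal_div_of_pos hJ, ENNReal.div_eq_inv_mul, mul_assoc]
  have hJ0 : ENNReal.ofReal (Jw (d+k)) ≠ 0 := by simpa using hJ
  have hprob : IsProbabilityMeasure ν := by
    constructor
    have := hνl 1 measurable_one
    simp only [Pi.one_apply, lintegral_one, mul_one] at this
    rw [this, lJ _ (by omega), ENNReal.inv_mul_cancel hJ0 ENNReal.ofReal_ne_top]
  have hνpos : ∀ᵐ w ∂ν, 0 < w := by
    have : ν ≪ volume.restrict (Set.Ioi 0) := withDensity_absolutelyContinuous _ _
    exact this.ae_le (ae_restrict_mem measurableSet_Ioi)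
  -- mixture identity
  have hmix : ∀ r, 0 ≤ r → Fg d r = ∫ w, Fb d k (r / w) ∂ν := by
    intro r hr
    rw [integral_eq_lintegral_of_nonneg_ae]
    · rw [hνl _ (by fun_prop), ← Fg_id d k hd hk hr, ← mul_assoc,
        ENNReal.inv_mul_cancel hJ0 ENNReal.ofReal_ne_top, one_mul,
        ENNReal.toReal_ofReal (Fg_nonneg d hd hr)]
    · filter_upwards [hνpos] with w hw
      exact Fb_nonneg d k (div_nonneg hr hw.le)
    · exact (by fun_prop : Measurable fun w => Fb d k (r/w)).aestronglyMeasurable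
  have hbd : ∀ r, 0 ≤ r → ∀ᵐ w ∂ν, Fb d k (r/w) ∈ Set.Icc (0:ℝ) 1 := by
    intro r hr
    filter_upwards [hνpos] with w hw
    exact ⟨Fb_nonneg d k (div_nonneg hr hw.le), Fb_le_one d k hk (div_nonneg hr hw.le)⟩
  have hjen : ∀ r, 0 ≤ r → ∫⁻ w, ENNReal.ofReal (1 - Fb d k (r/w) ^ (d+k)) ∂ν ≤
      ENNReal.ofReal (1 - Fg d r ^ (d+k)) := by
    intro r hr
    have i1 : Integrable (fun w => Fb d k (r/w)) ν := by
      refine Integrable.of_bound (by fun_prop : Measurable fun w => Fb d k (r/w)).aestronglyMeasurable 1 ?_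
      filter_upwards [hbd r hr] with w hw
      rw [Real.norm_of_nonneg hw.1]; exact hw.2
    have i2 : Integrable (fun w => Fb d k (r/w) ^ (d+k)) ν := by
      refine Integrable.of_bound (by fun_prop : Measurable fun w => Fb d k (r/w) ^ (d+k)).aestronglyMeasurable 1 ?_
      filter_upwards [hbd r hr] with w hw
      rw [Real.norm_of_nonneg (pow_nonneg hw.1 _)]; exact pow_le_one₀ hw.1 hw.2
    have j := (convexOn_pow (𝕜 := ℝ) (d+k)).map_integral_le (μ := ν) (f := fun w => Fb d k (r/w))
      (continuous_pow _).continuousOn isClosed_Ici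
      (by filter_upwards [hbd r hr] with w hw; exact hw.1) i1 i2
    rw [← hmix r hr] at j
    have i3 : Integrable (fun w => (1:ℝ) - Fb d k (r/w)^(d+k)) ν := (integrable_const 1).sub i2
    rw [← ofReal_integral_eq_lintegral_ofReal i3]
    · refine ENNReal.ofReal_le_ofReal ?_
      rw [integral_sub (integrable_const 1) i2]
      simp only [integral_const, probReal_univ, smul_eq_mul, mul_one]
      linarith
    · filter_upwards [hbd r hr] with w hw
      have := pow_le_one₀ hw.1 hw.2 (n := d+k)
      simp only [Pi.zero_apply]; linarith
  calc _ = ∫⁻ w, (ENNReal.ofReal w * (∫⁻ r in Set.Ioi (0:ℝ), ENNReal.ofReal (1 - Fb d k r ^ (d+k)))) ∂ν := by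
        rw [lintegral_mul_const _ (by fun_prop)]
        congr 1
        rw [hνl _ (by fun_prop)]
        have : ∫⁻ w in Set.Ioi 0, ENNReal.ofReal (wt (d+k) w) * ENNReal.ofReal w =
            ENNReal.ofReal (Jw (d+k+1)) := by
          rw [← lJ _ (by omega)]
          refine setLIntegral_congr_fun measurableSet_Ioi ?_
          intro w hw
          have hw : 0 < w := hw
          simp only
          rw [← ENNReal.ofReal_mul (wt_nonneg _ hw.le)]
          congr 1
          unfold wt
          rw [show d + k + 1 - 1 = (d + k - 1) + 1 by omega, pow_succ]
          ring
        rw [this, ENNReal.ofReal_div_of_pos hJ, ENNReal.div_eq_inv_mul]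
    _ = ∫⁻ w, (∫⁻ r in Set.Ioi (0:ℝ), ENNReal.ofReal (1 - Fb d k (r/w) ^ (d+k))) ∂ν := by
        refine lintegral_congr_ae ?_
        filter_upwards [hνpos] with w hw
        rw [lintegral_scale (fun x => ENNReal.ofReal (1 - Fb d k x ^ (d+k))) hw]
    _ = ∫⁻ r in Set.Ioi (0:ℝ), (∫⁻ w, ENNReal.ofReal (1 - Fb d k (r/w) ^ (d+k)) ∂ν) := by
        rw [lintegral_lintegral_swap]
        refine Measurable.aemeasurable ?_
        unfold Function.uncurry
        fun_prop
    _ ≤ _ := setLIntegral_mono' measurableSet_Ioi (fun r hr => hjen r (le_of_lt hr))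

lemma Fg_eq (d : ℕ) (hd : 2 ≤ d) {r : ℝ} (hr : 0 ≤ r) :
    Fg d r = lowerIncGamma ((d:ℝ)/2) (r^2/2) / Real.Gamma ((d:ℝ)/2) := by
  have hd' : (2:ℝ) ≤ d := by exact_mod_cast hd
  have key : ∫ x in (0:ℝ)..r, wt d x = 2 ^ ((d:ℝ)/2 - 1) * lowerIncGamma ((d:ℝ)/2) (r^2/2) := by
    have h := intervalIntegral.integral_comp_mul_deriv (a := 0) (b := r)
      (f := fun x : ℝ => x^2/2) (f' := fun x => x)
      (g := fun t => t ^ ((d:ℝ)/2 - 1) * Real.exp (-t))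
      (fun x _ => by
        have := (hasDerivAt_pow 2 x).div_const 2
        simpa using this) continuousOn_id
      (by
        refine Continuous.mul ?_ (by fun_prop)
        exact Real.continuous_rpow_const (by linarith))
    unfold lowerIncGamma
    have h0 : (0:ℝ)^2/2 = 0 := by norm_num
    rw [h0] at h
    rw [← h, ← intervalIntegral.integral_const_mul]
    refine intervalIntegral.integral_congr ?_
    intro x hx
    rw [Set.uIcc_of_le hr] at hx
    have hx0 : 0 ≤ x := hx.1
    simp only [Function.comp]
    rw [Real.div_rpow (by positivity) (by norm_num), ← Real.rpow_natCast x 2, ← Real.rpow_mul hx0]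
    have h2 : (2:ℝ) ^ ((d:ℝ)/2 - 1) ≠ 0 := (Real.rpow_pos_of_pos (by norm_num) _).ne'
    have h3 : x ^ (((2:ℕ):ℝ) * ((d:ℝ)/2 - 1)) * x = x ^ (d - 1) := by
      have : ((2:ℕ):ℝ) * ((d:ℝ)/2 - 1) = ((d - 2 : ℕ) : ℝ) := by
        push_cast [Nat.cast_sub hd]; ring
      rw [this, Real.rpow_natCast, ← pow_succ]
      congr 1; omega
    unfold wt
    rw [← h3, Real.rpow_natCast x 2]
    field_simp
  unfold Fg
  rw [key, J_eq d (by omega)]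
  have h2 : (2:ℝ) ^ ((d:ℝ)/2 - 1) ≠ 0 := (Real.rpow_pos_of_pos (by norm_num) _).ne'
  rw [mul_div_mul_left _ _ h2]

lemma one_sub_Fg (d : ℕ) (hd : 1 ≤ d) {r : ℝ} (hr : 0 ≤ r) :
    1 - Fg d r = (∫ x in Set.Ioi r, wt d x) / Jw d := by
  have hJ := J_pos d hd
  have h := intervalIntegral.integral_interval_add_Ioi (a := 0) (b := r) (f := wt d) (μ := volume)
    (wt_integrable d hd) ((wt_integrable d hd).mono_set (Set.Ioi_subset_Ioi hr))
  unfold Fg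
  rw [eq_div_iff hJ.ne', sub_mul, div_mul_cancel₀ _ hJ.ne']
  unfold Jw
  linarith

lemma Fg_le_one (d : ℕ) (hd : 1 ≤ d) {r : ℝ} (hr : 0 ≤ r) : Fg d r ≤ 1 := by
  have h := one_sub_Fg d hd hr
  have : 0 ≤ (∫ x in Set.Ioi r, wt d x) / Jw d :=
    div_nonneg (setIntegral_nonneg measurableSet_Ioi
      (fun x hx => wt_nonneg d (hr.trans (le_of_lt hx)))) (J_pos d hd).le
  linarith

lemma Fg_tail (d : ℕ) (hd : 1 ≤ d) {r : ℝ} (hr : 0 < r) :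
    1 - Fg d r ≤ (Jw (d+2) / Jw d) * r ^ (-2:ℝ) := by
  have hJ := J_pos d hd
  rw [one_sub_Fg d hd hr.le, div_mul_eq_mul_div]
  refine div_le_div_of_nonneg_right ?_ hJ.le
  have i1 : IntegrableOn (wt (d+2)) (Set.Ioi r) :=
    (wt_integrable (d+2) (by omega)).mono_set (Set.Ioi_subset_Ioi hr.le)
  calc ∫ x in Set.Ioi r, wt d x ≤ ∫ x in Set.Ioi r, wt (d+2) x * r ^ (-2:ℝ) := by
        refine setIntegral_mono_on ((wt_integrable d hd).mono_set (Set.Ioi_subset_Ioi hr.le))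
          (i1.mul_const _) measurableSet_Ioi ?_
        intro x hx
        have hx : r < x := hx
        have hx0 : 0 < x := hr.trans hx
        have h1 : wt (d+2) x = wt d x * x^2 := by
          unfold wt
          rw [show d + 2 - 1 = (d - 1) + 2 by omega, pow_add]; ring
        have h2 : r ^ (-2:ℝ) = (r^2)⁻¹ := by
          rw [Real.rpow_neg hr.le]; norm_cast
        rw [h1, h2, mul_assoc]
        refine le_mul_of_one_le_right (wt_nonneg d hx0.le) ?_
        rw [← div_eq_mul_inv, one_le_div (by positivity)]
        exact pow_le_pow_left₀ hr.le hx.le 2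
    _ = (∫ x in Set.Ioi r, wt (d+2) x) * r ^ (-2:ℝ) := integral_mul_const _ _
    _ ≤ _ := by
        refine mul_le_mul_of_nonneg_right ?_ (Real.rpow_nonneg hr.le _)
        refine setIntegral_mono_set (wt_integrable (d+2) (by omega)) ?_
          (Set.Ioi_subset_Ioi hr.le).eventuallyLE
        filter_upwards [ae_restrict_mem measurableSet_Ioi] with x hx
        exact wt_nonneg _ (le_of_lt hx)

lemma Fg_cont (d : ℕ) : Continuous (Fg d) := by
  unfold Fg
  exact (intervalIntegral.continuous_primitive
    (fun a b => (wt_cont d).intervalIntegrable a b) 0).div_const _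

lemma Fg_integrable (d n : ℕ) (hd : 1 ≤ d) :
    IntegrableOn (fun r => 1 - Fg d r ^ n) (Set.Ioi 0) := by
  have hc : Continuous (fun r => 1 - Fg d r ^ n) := continuous_const.sub ((Fg_cont d).pow n)
  rw [← Set.Ioc_union_Ioi_eq_Ioi (zero_le_one (α := ℝ))]
  refine IntegrableOn.union (hc.intervalIntegrable 0 1).1 ?_
  have hi : IntegrableOn (fun r : ℝ => (n:ℝ) * ((Jw (d+2) / Jw d) * r ^ (-2:ℝ))) (Set.Ioi 1) :=
    ((integrableOn_Ioi_rpow_of_lt (by norm_num) one_pos).const_mul _).const_mul _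
  refine Integrable.mono' hi hc.aestronglyMeasurable ?_
  filter_upwards [ae_restrict_mem measurableSet_Ioi] with r hr
  have hr : 1 < r := hr
  have h0 := Fg_nonneg d hd (by linarith : 0 ≤ r)
  have h1 := Fg_le_one d hd (by linarith : 0 ≤ r)
  have h2 := Fg_tail d hd (by linarith : 0 < r)
  have h3 := one_add_mul_le_pow (a := Fg d r - 1) (by linarith) n
  rw [add_sub_cancel] at h3
  have h4 := pow_le_one₀ h0 h1 (n := n)
  rw [Real.norm_of_nonneg (by linarith)]
  have : (n:ℝ) * (1 - Fg d r) ≤ n * ((Jw (d+2) / Jw d) * r ^ (-2:ℝ)) :=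
    mul_le_mul_of_nonneg_left h2 (Nat.cast_nonneg _)
  linarith

lemma K_integral (d n : ℕ) (hd : 2 ≤ d) :
    (∫ y in Set.Ioi (0 : ℝ),
        (1 - (lowerIncGamma ((d : ℝ) / 2) y / Real.Gamma ((d : ℝ) / 2)) ^ n) / Real.sqrt y) =
      √2 * ∫ r in Set.Ioi (0:ℝ), (1 - Fg d r ^ n) := by
  have him : (fun x : ℝ => x^2/2) '' Set.Ioi (0:ℝ) = Set.Ioi 0 := by
    ext y; constructor
    · rintro ⟨x, hx, rfl⟩
      have hx : 0 < x := hx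
      simp only [Set.mem_Ioi]; positivity
    · intro hy
      have hy : 0 < y := hy
      refine ⟨√(2*y), Real.sqrt_pos.2 (by positivity), ?_⟩
      simp only
      rw [Real.sq_sqrt (by positivity)]; ring
  have h := integral_image_eq_integral_abs_deriv_smul (s := Set.Ioi (0:ℝ))
    (f := fun x : ℝ => x^2/2) (f' := fun x => x) measurableSet_Ioi
    (fun x _ => by
        have := (hasDerivAt_pow 2 x).div_const 2
        exact (by simpa using this : HasDerivAt (fun x : ℝ => x^2/2) x x).hasDerivWithinAt)
    (fun x hx y hy hxy => by
      have hx : 0 < x := hx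
      have hy : 0 < y := hy
      have : x^2 = y^2 := by simp only at hxy; linarith
      exact (pow_left_inj₀ hx.le hy.le two_ne_zero).1 this)
    (fun y => (1 - (lowerIncGamma ((d : ℝ) / 2) y / Real.Gamma ((d : ℝ) / 2)) ^ n) / Real.sqrt y)
  rw [him] at h
  rw [h, ← integral_const_mul]
  refine setIntegral_congr_fun measurableSet_Ioi ?_
  intro x hx
  have hx : 0 < x := hx
  simp only [smul_eq_mul]
  rw [← Fg_eq d hd hx.le, abs_of_pos hx, Real.sqrt_div (by positivity), Real.sqrt_sq hx.le]
  field_simp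

lemma lint_Fg (d n : ℕ) (hd : 1 ≤ d) :
    ∫⁻ r in Set.Ioi (0:ℝ), ENNReal.ofReal (1 - Fg d r ^ n) =
      ENNReal.ofReal (∫ r in Set.Ioi (0:ℝ), (1 - Fg d r ^ n)) := by
  rw [ofReal_integral_eq_lintegral_ofReal (Fg_integrable d n hd)]
  filter_upwards [ae_restrict_mem measurableSet_Ioi] with r hr
  have hr : 0 < r := hr
  have h4 := pow_le_one₀ (Fg_nonneg d hd hr.le) (Fg_le_one d hd hr.le) (n := n)
  simp only [Pi.zero_apply]; linarith

lemma K_eq (d n : ℕ) (hd : 2 ≤ d) (hn : 1 ≤ n) :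
    stiefelK d n + √((d:ℝ)/n) =
      (1 + (d:ℝ)/(2*n)) * (∫ r in Set.Ioi (0:ℝ), (1 - Fg d r ^ n)) / √n := by
  have hn' : (0:ℝ) < n := by exact_mod_cast hn
  unfold stiefelK
  rw [K_integral d n hd, Real.sqrt_mul (by norm_num)]
  have : 0 < √(n:ℝ) := Real.sqrt_pos.2 hn'
  have : 0 < √(2:ℝ) := Real.sqrt_pos.2 (by norm_num)
  field_simp
  ring

/-- the mean of the maximum is at most `M` -/
lemma mean_le (d k : ℕ) (hd : 2 ≤ d) (hk : 2 ≤ k) :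
    ∫⁻ r in Set.Ioi (0:ℝ), ENNReal.ofReal (1 - Fb d k r ^ (d+k)) ≤
      ENNReal.ofReal (stiefelK d (d+k) + √((d:ℝ)/((d+k:ℕ):ℝ))) := by
  have h := mean_compare d k (by omega) hk
  rw [lint_Fg d _ (by omega)] at h
  rw [K_eq d (d+k) hd (by omega)]
  set m := ∫ r in Set.Ioi (0:ℝ), (1 - Fg d r ^ (d+k)) with hm
  have hm0 : 0 ≤ m := by
    refine setIntegral_nonneg measurableSet_Ioi ?_
    intro r hr
    have hr : 0 < r := hr
    have h4 := pow_le_one₀ (Fg_nonneg d (by omega) hr.le) (Fg_le_one d (by omega) hr.le) (n := d+k)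
    linarith
  have hJ := J_pos (d+k) (by omega)
  have hJ1 := J_pos (d+k+1) (by omega)
  have hJl := J_lower (d+k-1) (by omega)
  rw [show d+k-1+1 = d+k by omega, show d+k-1+2 = d+k+1 by omega] at hJl
  set R := Jw (d+k+1) / Jw (d+k) with hR
  have hR0 : 0 < R := div_pos hJ1 hJ
  have hR1 : √((d+k-1:ℕ):ℝ) ≤ R := by rw [hR, le_div_iff₀ hJ]; exact hJl
  have h2 : ∫⁻ r in Set.Ioi (0:ℝ), ENNReal.ofReal (1 - Fb d k r ^ (d+k)) ≤
      ENNReal.ofReal (m / R) := by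
    rw [ENNReal.ofReal_div_of_pos hR0, ENNReal.le_div_iff_mul_le (by simp [hR0]) (by simp)]
    rw [mul_comm]; exact h
  refine h2.trans (ENNReal.ofReal_le_ofReal ?_)
  have hd' : (2:ℝ) ≤ d := by exact_mod_cast hd
  have hk' : (2:ℝ) ≤ k := by exact_mod_cast hk
  set n : ℝ := ((d+k:ℕ):ℝ) with hn
  have hnn : n = d + k := by rw [hn]; push_cast; ring
  have hn0 : 0 < n := by linarith
  have hcast : ((d+k-1:ℕ):ℝ) = n - 1 := by
    rw [Nat.cast_sub (by omega), hn]; push_cast; ring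
  rw [hcast] at hR1
  have hsn : 0 < √n := Real.sqrt_pos.2 hn0
  have hkey : √n ≤ (1 + (d:ℝ)/(2*n)) * R := by
    refine le_trans ?_ (mul_le_mul_of_nonneg_left hR1 (by positivity))
    refine Real.sqrt_le_iff.2 ⟨by positivity, ?_⟩
    rw [mul_pow, Real.sq_sqrt (by linarith)]
    have e : (1 + (d:ℝ)/(2*n))^2 * (n-1) - n = d - 1 - d/n + (d/(2*n))^2*(n-1) := by
      field_simp; ring
    have : (d:ℝ)/n ≤ 1 := by rw [div_le_one hn0]; linarith
    have : 0 ≤ ((d:ℝ)/(2*n))^2*(n-1) := mul_nonneg (sq_nonneg _) (by linarith)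
    linarith
  rw [div_le_div_iff₀ hR0 hsn]
  nlinarith

lemma lintegral_radial {E : Type*} [NormedAddCommGroup E] [NormedSpace ℝ E]
    [MeasurableSpace E] [BorelSpace E] [FiniteDimensional ℝ E] [Nontrivial E]
    (μ : Measure E) [μ.IsAddHaarMeasure] (f : ℝ → ENNReal) (hf : Measurable f) :
    ∫⁻ x, f ‖x‖ ∂μ = μ.toSphere Set.univ *
      ∫⁻ y in Set.Ioi (0:ℝ), ENNReal.ofReal (y ^ (Module.finrank ℝ E - 1)) * f y := by
  calc ∫⁻ x, f ‖x‖ ∂μ = ∫⁻ x : ({(0)}ᶜ : Set E), f (‖x.1‖) ∂(μ.comap (↑)) := by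
        rw [lintegral_subtype_comap (measurableSet_singleton _).compl fun x ↦ f (‖x‖),
          restrict_compl_singleton]
    _ = ∫⁻ x, f x.2 ∂μ.toSphere.prod (Measure.volumeIoiPow (Module.finrank ℝ E - 1)) := by
        simpa using μ.measurePreserving_homeomorphUnitSphereProd.lintegral_comp_emb
          (Homeomorph.measurableEmbedding _) (f ∘ Subtype.val ∘ Prod.snd)
    _ = μ.toSphere Set.univ *
        ∫⁻ x : Set.Ioi (0 : ℝ), f x ∂(Measure.volumeIoiPow (Module.finrank ℝ E - 1)) := by
        have := lintegral_prod_mul (μ := μ.toSphere)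
          (ν := Measure.volumeIoiPow (Module.finrank ℝ E - 1)) (f := fun _ => 1)
          (g := fun x => f x.1) aemeasurable_const
          (hf.comp measurable_subtype_coe).aemeasurable
        simpa using this
    _ = _ := by
        rw [Measure.volumeIoiPow, lintegral_withDensity_eq_lintegral_mul _ (by fun_prop)
          (by fun_prop : Measurable fun x : Set.Ioi (0:ℝ) => f x)]
        congr 1
        exact lintegral_subtype_comap measurableSet_Ioi
          (fun y => ENNReal.ofReal (y ^ (Module.finrank ℝ E - 1)) * f y)

lemma radial_prod {E F : Type*} [NormedAddCommGroup E] [InnerProductSpace ℝ E]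
    [MeasurableSpace E] [BorelSpace E] [FiniteDimensional ℝ E] [Nontrivial E]
    [NormedAddCommGroup F] [InnerProductSpace ℝ F]
    [MeasurableSpace F] [BorelSpace F] [FiniteDimensional ℝ F] [Nontrivial F]
    (G : ℝ → ℝ → ENNReal) (hGm : Measurable (Function.uncurry G)) :
    ∫⁻ z : WithLp 2 (E × F), G ‖z.fst‖ ‖z.snd‖ =
      (volume : Measure E).toSphere Set.univ * ((volume : Measure F).toSphere Set.univ *
      ∫⁻ p in Set.Ioi (0:ℝ), ENNReal.ofReal (p ^ (Module.finrank ℝ E - 1)) *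
        ∫⁻ q in Set.Ioi (0:ℝ), ENNReal.ofReal (q ^ (Module.finrank ℝ F - 1)) * G p q) := by
  have hG1 : ∀ p, Measurable (G p) := fun p => hGm.of_uncurry_left
  have hGn : Measurable (fun z : E × F => G ‖z.1‖ ‖z.2‖) :=
    hGm.comp (measurable_fst.norm.prodMk measurable_snd.norm)
  have h1 : ∫⁻ z : WithLp 2 (E × F), G ‖z.fst‖ ‖z.snd‖ =
      ∫⁻ z : E × F, G ‖z.1‖ ‖z.2‖ := (WithLp.volume_preserving_ofLp E F).lintegral_comp hGn
  rw [h1, Measure.volume_eq_prod, lintegral_prod _ hGn.aemeasurable]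
  have h2 : ∀ x : E, ∫⁻ y : F, G ‖x‖ ‖y‖ = (volume : Measure F).toSphere Set.univ *
      ∫⁻ q in Set.Ioi (0:ℝ), ENNReal.ofReal (q ^ (Module.finrank ℝ F - 1)) * G ‖x‖ q :=
    fun x => lintegral_radial (volume : Measure F) (G ‖x‖) (hG1 _)
  simp_rw [h2]
  have hm0 : Measurable (fun p => ∫⁻ q in Set.Ioi (0:ℝ),
      ENNReal.ofReal (q ^ (Module.finrank ℝ F - 1)) * G p q) := by
    refine Measurable.lintegral_prod_right'
      (f := fun z : ℝ × ℝ => ENNReal.ofReal (z.2 ^ (Module.finrank ℝ F - 1)) * G z.1 z.2) ?_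
    exact (by fun_prop : Measurable fun z : ℝ × ℝ =>
      ENNReal.ofReal (z.2 ^ (Module.finrank ℝ F - 1))).mul hGm
  rw [lintegral_const_mul _ (by fun_prop : Measurable fun x : E => ∫⁻ q in Set.Ioi (0:ℝ),
      ENNReal.ofReal (q ^ (Module.finrank ℝ F - 1)) * G ‖x‖ q),
    lintegral_radial (volume : Measure E) _ hm0]
  exact mul_left_comm _ _ _

lemma gauss_polar (d k : ℕ) (hd : 1 ≤ d) (hk : 1 ≤ k) (g : ℝ → ENNReal) (hg : Measurable g) :
    ∫⁻ p in Set.Ioi (0:ℝ), ENNReal.ofReal (p^(d-1)) *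
      ∫⁻ q in Set.Ioi (0:ℝ), ENNReal.ofReal (q ^ (k-1)) *
        (ENNReal.ofReal (Real.exp (-((p^2+q^2)/2))) * g (p / √(p^2+q^2))) =
    ENNReal.ofReal (Jw (d+k)) * ∫⁻ ρ in Set.Ioo (0:ℝ) 1, ENNReal.ofReal (phi d k ρ) * g ρ := by
  have h4 : ∫⁻ p in Set.Ioi (0:ℝ), ENNReal.ofReal (p^(d-1)) *
      ∫⁻ q in Set.Ioi (0:ℝ), ENNReal.ofReal (q ^ (k-1)) *
        (ENNReal.ofReal (Real.exp (-((p^2+q^2)/2))) * g (p / √(p^2+q^2))) =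
      ∫⁻ p in Set.Ioi (0:ℝ), ∫⁻ q in Set.Ioi (0:ℝ), ENNReal.ofReal (wt d p * wt k q) *
        (fun z : ℝ × ℝ => g z.1) (p/√(p^2+q^2), √(p^2+q^2)) := by
    refine setLIntegral_congr_fun measurableSet_Ioi ?_
    intro p hp
    have hp : 0 < p := hp
    simp only
    rw [← lintegral_const_mul' _ _ ENNReal.ofReal_ne_top]
    refine setLIntegral_congr_fun measurableSet_Ioi ?_
    intro q hq
    have hq : 0 < q := hq
    simp only
    rw [← mul_assoc, ← mul_assoc, ← ENNReal.ofReal_mul (by positivity),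
      ← ENNReal.ofReal_mul (by positivity)]
    congr 2
    unfold wt
    rw [show -((p^2+q^2)/2) = -(p^2/2) + -(q^2/2) by ring, Real.exp_add]
    ring
  rw [h4, polar_weighted d k hd hk (fun z : ℝ × ℝ => g z.1) (hg.comp measurable_fst)]
  rw [← lJ _ (by omega), ← lintegral_mul_const _ (wt_cont _).measurable.ennreal_ofReal]
  refine setLIntegral_congr_fun measurableSet_Ioi ?_
  intro w hw
  have hw : 0 < w := hw
  simp only
  rw [← lintegral_const_mul' _ _ ENNReal.ofReal_ne_top]
  refine lintegral_congr fun ρ => ?_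
  rw [ENNReal.ofReal_mul (wt_nonneg _ hw.le), mul_assoc]

lemma gauss_prod (d k : ℕ) (hd : 1 ≤ d) (hk : 1 ≤ k) :
    ∃ C : ENNReal, C ≠ 0 ∧ C ≠ ⊤ ∧ ∀ g : ℝ → ENNReal, Measurable g →
      ∫⁻ z : WithLp 2 (EuclideanSpace ℝ (Fin d) × EuclideanSpace ℝ (Fin k)),
        ENNReal.ofReal (Real.exp (-(‖z‖^2/2))) * g (‖z.fst‖/‖z‖) =
      C * ∫⁻ ρ in Set.Ioo (0:ℝ) 1, ENNReal.ofReal (phi d k ρ) * g ρ := by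
  have i1 : Nonempty (Fin d) := ⟨⟨0, hd⟩⟩
  have i2 : Nonempty (Fin k) := ⟨⟨0, hk⟩⟩
  obtain ⟨cd, hcd⟩ : ∃ cd, cd = (volume : Measure (EuclideanSpace ℝ (Fin d))).toSphere Set.univ :=
    ⟨_, rfl⟩
  obtain ⟨ck, hck⟩ : ∃ ck, ck = (volume : Measure (EuclideanSpace ℝ (Fin k))).toSphere Set.univ :=
    ⟨_, rfl⟩
  have hcd0 : cd ≠ 0 := by
    rw [hcd, Ne, Measure.measure_univ_eq_zero]; exact Measure.toSphere_ne_zero _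
  have hck0 : ck ≠ 0 := by
    rw [hck, Ne, Measure.measure_univ_eq_zero]; exact Measure.toSphere_ne_zero _
  have hcdt : cd ≠ ⊤ := by rw [hcd]; exact measure_ne_top _ _
  have hckt : ck ≠ ⊤ := by rw [hck]; exact measure_ne_top _ _
  have hJ := J_pos (d+k) (by omega)
  have hJ0 : ENNReal.ofReal (Jw (d+k)) ≠ 0 := by simpa using hJ
  refine ⟨cd * (ck * ENNReal.ofReal (Jw (d+k))), mul_ne_zero hcd0 (mul_ne_zero hck0 hJ0),
    ENNReal.mul_ne_top hcdt (ENNReal.mul_ne_top hckt ENNReal.ofReal_ne_top), ?_⟩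
  intro g hg
  have hGm : Measurable (Function.uncurry (fun p q : ℝ =>
    ENNReal.ofReal (Real.exp (-((p^2+q^2)/2))) * g (p / √(p^2+q^2)))) := by
    unfold Function.uncurry; fun_prop
  have h := radial_prod (E := EuclideanSpace ℝ (Fin d)) (F := EuclideanSpace ℝ (Fin k)) _ hGm
  rw [← hcd, ← hck, finrank_euclideanSpace, finrank_euclideanSpace, Fintype.card_fin,
    Fintype.card_fin, gauss_polar d k hd hk g hg] at h
  rw [mul_assoc, mul_assoc, ← h]
  refine lintegral_congr fun z => ?_
  rw [← WithLp.prod_norm_sq_eq_of_L2, Real.sqrt_sq (norm_nonneg _)]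

/-- the Euclidean norm of `Uᵀ x` -/
def nrm {n d : ℕ} (U : Matrix (Fin n) (Fin d) ℝ) (x : EuclideanSpace ℝ (Fin n)) : ℝ :=
  √(∑ j, (∑ i, U i j * x i)^2)

lemma exists_iso (d k : ℕ) (U : Matrix (Fin (d+k)) (Fin d) ℝ) (hU : Uᵀ * U = 1) :
    ∃ L : EuclideanSpace ℝ (Fin (d+k)) ≃ₗᵢ[ℝ]
      WithLp 2 (EuclideanSpace ℝ (Fin d) × EuclideanSpace ℝ (Fin k)),
      ∀ x, ‖(L x).fst‖ = nrm U x := by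
  set v : Fin d ⊕ Fin k → EuclideanSpace ℝ (Fin (d+k)) :=
    Sum.elim (fun j => WithLp.toLp 2 (fun i => U i j)) (fun _ => 0) with hv
  have hon : Orthonormal ℝ ((Set.range (Sum.inl : Fin d → Fin d ⊕ Fin k)).domRestrict v) := by
    rw [orthonormal_iff_ite]
    rintro ⟨_, ⟨a, rfl⟩⟩ ⟨_, ⟨b, rfl⟩⟩
    have h := congrFun (congrFun hU a) b
    simp only [Matrix.mul_apply, Matrix.transpose_apply, Matrix.one_apply] at h
    simp only [Set.domRestrict_apply, hv, Sum.elim_inl, PiLp.inner_apply, RCLike.inner_apply,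
      conj_trivial]
    have e : (if a = b then (1:ℝ) else 0) =
        if (⟨Sum.inl a, ⟨a, rfl⟩⟩ : Set.range (Sum.inl : Fin d → Fin d ⊕ Fin k)) =
          ⟨Sum.inl b, ⟨b, rfl⟩⟩ then 1 else 0 := by
      by_cases hab : a = b
      · subst hab; simp
      · rw [if_neg hab, if_neg]
        intro hc
        exact hab (Sum.inl.inj (congrArg Subtype.val hc))
    refine Eq.trans ?_ e
    rw [← h]
    exact Finset.sum_congr rfl fun _ _ => mul_comm _ _
  obtain ⟨b, hb⟩ := hon.exists_orthonormalBasis_extension_of_card_eq (by simp)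
  set b' := (EuclideanSpace.basisFun (Fin d) ℝ).prod (EuclideanSpace.basisFun (Fin k) ℝ) with hb'
  refine ⟨b.equiv b' (Equiv.refl _), fun x => ?_⟩
  have hcoord : ∀ j, ((b.equiv b' (Equiv.refl _)) x).fst j = ∑ i, U i j * x i := by
    intro j
    set L := b.equiv b' (Equiv.refl _)
    have e1 : inner ℝ (L (b (Sum.inl j))) (L x) = inner ℝ (b (Sum.inl j)) x := L.inner_map_map _ _
    rw [b.equiv_apply_basis b', hb _ ⟨j, rfl⟩] at e1
    simp only [Equiv.refl_apply, hb', OrthonormalBasis.prod_apply, Sum.elim_inl, hv,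
      Function.comp, WithLp.prod_inner_apply] at e1
    simp [PiLp.inner_apply] at e1
    rw [e1]
    exact Finset.sum_congr rfl fun _ _ => mul_comm _ _
  rw [EuclideanSpace.norm_eq, nrm]
  simp_rw [hcoord, Real.norm_eq_abs, sq_abs]

lemma meas_entry {n d : ℕ} (i : Fin n) (j : Fin d) :
    Measurable (fun U : Matrix (Fin n) (Fin d) ℝ => U i j) :=
  (measurable_pi_apply j).comp (measurable_pi_apply i)

lemma meas_mul {n d : ℕ} (Q : Matrix (Fin n) (Fin n) ℝ) :
    Measurable (fun U : Matrix (Fin n) (Fin d) ℝ => Q * U) := by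
  refine measurable_pi_lambda _ fun i => measurable_pi_lambda _ fun j => ?_
  simp only [Matrix.mul_apply]
  exact Finset.measurable_sum _ fun c _ => (meas_entry c j).const_mul _

lemma meas_rowNorm {n d : ℕ} (i : Fin n) :
    Measurable (fun U : Matrix (Fin n) (Fin d) ℝ => rowNorm U i) := by
  unfold rowNorm
  exact (Finset.measurable_sum _ fun j _ => (meas_entry i j).pow_const 2).sqrt

lemma meas_nrm {n d : ℕ} :
    Measurable (fun z : EuclideanSpace ℝ (Fin n) × Matrix (Fin n) (Fin d) ℝ => nrm z.2 z.1) := by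
  unfold nrm
  refine (Finset.measurable_sum _ fun j _ => (Finset.measurable_sum _ fun i _ => ?_).pow_const 2).sqrt
  refine ((meas_entry i j).comp measurable_snd).mul ?_
  have : Measurable (fun x : EuclideanSpace ℝ (Fin n) => x i) := by fun_prop
  exact this.comp measurable_fst

lemma fixU (d k : ℕ) (U : Matrix (Fin (d+k)) (Fin d) ℝ) (hU : Uᵀ * U = 1)
    (g : ℝ → ENNReal) :
    ∫⁻ x : EuclideanSpace ℝ (Fin (d+k)), ENNReal.ofReal (Real.exp (-(‖x‖^2/2))) * g (nrm U x/‖x‖) =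
      ∫⁻ z : WithLp 2 (EuclideanSpace ℝ (Fin d) × EuclideanSpace ℝ (Fin k)),
        ENNReal.ofReal (Real.exp (-(‖z‖^2/2))) * g (‖z.fst‖/‖z‖) := by
  obtain ⟨L, hL⟩ := exists_iso d k U hU
  rw [← L.measurePreserving.lintegral_comp_emb L.toHomeomorph.measurableEmbedding]
  refine lintegral_congr fun x => ?_
  rw [hL, L.norm_map]

lemma fixx {n d : ℕ} (μ : Measure (Matrix (Fin n) (Fin d) ℝ))
    (hinv : ∀ Q : Matrix (Fin n) (Fin n) ℝ, Qᵀ * Q = 1 →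
      Measure.map (fun U => Q * U) μ = μ) (i : Fin n)
    (x : EuclideanSpace ℝ (Fin n)) (hx : x ≠ 0) (g : ℝ → ENNReal) (hg : Measurable g) :
    ∫⁻ U, g (nrm U x / ‖x‖) ∂μ = ∫⁻ U, g (rowNorm U i) ∂μ := by
  have hx0 : 0 < ‖x‖ := norm_pos_iff.2 hx
  have hon : Orthonormal ℝ (({i} : Set (Fin n)).domRestrict
      (fun _ : Fin n => (‖x‖⁻¹ • x : EuclideanSpace ℝ (Fin n)))) := by
    refine ⟨fun a => ?_, fun a b hab => ?_⟩
    · simp only [Set.domRestrict_apply, norm_smul, norm_inv, norm_norm]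
      exact inv_mul_cancel₀ hx0.ne'
    · exact absurd (Subsingleton.elim a b) hab
  obtain ⟨b, hb⟩ := hon.exists_orthonormalBasis_extension_of_card_eq (by simp)
  have hbi := hb i rfl
  set Q : Matrix (Fin n) (Fin n) ℝ := Matrix.of fun a c => b a c with hQ
  have hQ1 : Q * Qᵀ = 1 := by
    ext a c
    have h := orthonormal_iff_ite.1 b.orthonormal a c
    simp only [PiLp.inner_apply, RCLike.inner_apply, conj_trivial] at h
    rw [Matrix.mul_apply, Matrix.one_apply, ← h]
    exact Finset.sum_congr rfl fun _ _ => mul_comm _ _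
  have hQ2 : Qᵀ * Q = 1 := mul_eq_one_comm.1 hQ1
  have hmeas : Measurable (fun U : Matrix (Fin n) (Fin d) ℝ => g (rowNorm U i)) :=
    hg.comp (meas_rowNorm i)
  have h1 : ∫⁻ U, g (rowNorm U i) ∂μ = ∫⁻ U, g (rowNorm (Q * U) i) ∂μ := by
    conv_lhs => rw [← hinv Q hQ2]
    rw [lintegral_map hmeas (meas_mul Q)]
  rw [h1]
  refine lintegral_congr fun U => ?_
  congr 1
  unfold rowNorm nrm
  have e : ∀ j, (Q * U) i j = (∑ c, U c j * x c) / ‖x‖ := by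
    intro j
    rw [Matrix.mul_apply, Finset.sum_div]
    refine Finset.sum_congr rfl fun c _ => ?_
    simp only [hQ, Matrix.of_apply, hbi, PiLp.smul_apply, smul_eq_mul]
    field_simp
  simp_rw [e, div_pow]
  rw [← Finset.sum_div, Real.sqrt_div' _ (by positivity), Real.sqrt_sq hx0.le]

lemma row_dist (d k : ℕ) (hd : 1 ≤ d) (hk : 2 ≤ k)
    (μ : Measure (Matrix (Fin (d+k)) (Fin d) ℝ)) [IsProbabilityMeasure μ]
    (hsupp : μ {U : Matrix (Fin (d+k)) (Fin d) ℝ | Uᵀ * U = 1} = 1)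
    (hinv : ∀ Q : Matrix (Fin (d+k)) (Fin (d+k)) ℝ, Qᵀ * Q = 1 →
      Measure.map (fun U => Q * U) μ = μ) (i : Fin (d+k))
    (g : ℝ → ENNReal) (hg : Measurable g) :
    (∫⁻ U, g (rowNorm U i) ∂μ) * (∫⁻ ρ in Set.Ioo (0:ℝ) 1, ENNReal.ofReal (phi d k ρ)) =
      ∫⁻ ρ in Set.Ioo (0:ℝ) 1, ENNReal.ofReal (phi d k ρ) * g ρ := by
  obtain ⟨C, hC0, hCt, hC⟩ := gauss_prod d k hd (by omega)
  have hae : ∀ᵐ U ∂μ, Uᵀ * U = 1 := by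
    have hms : MeasurableSet {U : Matrix (Fin (d+k)) (Fin d) ℝ | Uᵀ * U = 1} := by
      have : {U : Matrix (Fin (d+k)) (Fin d) ℝ | Uᵀ * U = 1} =
          ⋂ a, ⋂ b, {U | ∑ c, U c a * U c b = (1 : Matrix (Fin d) (Fin d) ℝ) a b} := by
        ext U
        simp only [Set.mem_setOf_eq, Set.mem_iInter, ← Matrix.ext_iff, Matrix.mul_apply,
          Matrix.transpose_apply]
      rw [this]
      refine MeasurableSet.iInter fun a => MeasurableSet.iInter fun b => ?_
      exact measurableSet_eq_fun
        (Finset.measurable_sum _ fun c _ => (meas_entry c a).mul (meas_entry c b)) measurable_const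
    exact (prob_compl_eq_zero_iff hms).2 hsupp
  have : Nonempty (Fin (d+k)) := ⟨i⟩
  have hdens : Measurable (fun x : EuclideanSpace ℝ (Fin (d+k)) =>
      ENNReal.ofReal (Real.exp (-(‖x‖^2/2)))) := by fun_prop
  have key : ∀ g : ℝ → ENNReal, Measurable g →
      (∫⁻ x : EuclideanSpace ℝ (Fin (d+k)), ENNReal.ofReal (Real.exp (-(‖x‖^2/2)))) *
        (∫⁻ U, g (rowNorm U i) ∂μ) =
      C * ∫⁻ ρ in Set.Ioo (0:ℝ) 1, ENNReal.ofReal (phi d k ρ) * g ρ := by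
    intro g hg
    have hm : Measurable (fun z : EuclideanSpace ℝ (Fin (d+k)) × Matrix (Fin (d+k)) (Fin d) ℝ =>
        ENNReal.ofReal (Real.exp (-(‖z.1‖^2/2))) * g (nrm z.2 z.1/‖z.1‖)) := by
      refine (hdens.comp measurable_fst).mul (hg.comp ?_)
      exact meas_nrm.div measurable_fst.norm
    calc _ = ∫⁻ x : EuclideanSpace ℝ (Fin (d+k)), (ENNReal.ofReal (Real.exp (-(‖x‖^2/2))) *
            (∫⁻ U, g (rowNorm U i) ∂μ)) := by
          rw [lintegral_mul_const _ hdens]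
      _ = ∫⁻ x : EuclideanSpace ℝ (Fin (d+k)), (∫⁻ U, ENNReal.ofReal (Real.exp (-(‖x‖^2/2))) *
             g (nrm U x / ‖x‖) ∂μ) := by
          have h0 : ∀ᵐ x : EuclideanSpace ℝ (Fin (d+k)), x ≠ 0 :=
            Measure.ae_ne volume 0
          refine lintegral_congr_ae ?_
          filter_upwards [h0] with x hx
          rw [lintegral_const_mul' _ _ ENNReal.ofReal_ne_top, fixx μ hinv i x hx g hg]
      _ = ∫⁻ U, (∫⁻ x : EuclideanSpace ℝ (Fin (d+k)), ENNReal.ofReal (Real.exp (-(‖x‖^2/2))) *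
             g (nrm U x / ‖x‖)) ∂μ := lintegral_lintegral_swap hm.aemeasurable
      _ = ∫⁻ U, (C * ∫⁻ ρ in Set.Ioo (0:ℝ) 1, ENNReal.ofReal (phi d k ρ) * g ρ) ∂μ := by
          refine lintegral_congr_ae ?_
          filter_upwards [hae] with U hU
          rw [fixU d k U hU g, hC g hg]
      _ = _ := by simp
  have k1 := key 1 measurable_one
  simp only [Pi.one_apply, lintegral_one, measure_univ, mul_one] at k1
  have k2 := key g hg
  rw [k1, mul_assoc] at k2
  have := (ENNReal.mul_right_inj hC0 hCt).1 k2
  rw [mul_comm]; exact this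

lemma lphi_full (d k : ℕ) (hk : 2 ≤ k) :
    ∫⁻ ρ in Set.Ioo (0:ℝ) 1, ENNReal.ofReal (phi d k ρ) =
      ENNReal.ofReal (∫ u in (0:ℝ)..1, phi d k u) := by
  rw [intervalIntegral.integral_of_le zero_le_one, integral_Ioc_eq_integral_Ioo,
    ofReal_integral_eq_lintegral_ofReal]
  · exact (phi_int d k hk 0 1).1.mono_set Set.Ioo_subset_Ioc_self
  · filter_upwards [ae_restrict_mem measurableSet_Ioo] with x hx
    exact phi_nonneg d k hx.1.le hx.2.le

lemma lphi_tail (d k : ℕ) (hk : 2 ≤ k) {s : ℝ} (hs : 0 ≤ s) (hs1 : s ≤ 1) :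
    ∫⁻ ρ in Set.Ioo (0:ℝ) 1, ENNReal.ofReal (phi d k ρ) * (Set.Ici s).indicator 1 ρ ≤
      ENNReal.ofReal (∫ u in s..1, phi d k u) := by
  rw [intervalIntegral.integral_of_le hs1, ← integral_Icc_eq_integral_Ioc,
    ofReal_integral_eq_lintegral_ofReal]
  · have : ∀ x, ENNReal.ofReal (phi d k x) * (Set.Ici s).indicator 1 x =
      (Set.Ici s).indicator (fun x => ENNReal.ofReal (phi d k x)) x := by
      intro x; by_cases h : x ∈ Set.Ici s <;> simp [h]
    simp_rw [this]
    rw [setLIntegral_indicator measurableSet_Ici]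
    refine lintegral_mono_set ?_
    intro x hx
    exact ⟨hx.1, hx.2.2.le⟩
  · exact (phi_cont d k hk).integrableOn_Icc
  · filter_upwards [ae_restrict_mem measurableSet_Icc] with x hx
    exact phi_nonneg d k (hs.trans hx.1) hx.2

theorem main_aux (d k : ℕ) (hd : 2 ≤ d) (hk : 2 ≤ k)
    (μ : Measure (Matrix (Fin (d+k)) (Fin d) ℝ)) [IsProbabilityMeasure μ]
    (hsupp : μ {U : Matrix (Fin (d+k)) (Fin d) ℝ | Uᵀ * U = 1} = 1)
    (hinv : ∀ Q : Matrix (Fin (d+k)) (Fin (d+k)) ℝ, Qᵀ * Q = 1 →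
      Measure.map (fun U => Q * U) μ = μ)
    (M t : ℝ) (ht : 0 < t)
    (hM : ∫⁻ r in Set.Ioi (0:ℝ), ENNReal.ofReal (1 - Fb d k r ^ (d+k)) ≤ ENNReal.ofReal M) :
    μ {U : Matrix (Fin (d+k)) (Fin d) ℝ | M + t ≤ ⨆ i, rowNorm U i} ≤
      ENNReal.ofReal (Real.exp (-(((d:ℝ)+k-2)*t^2/8))) := by
  have hB := B_pos d k hk
  have hM0 : 0 < M := by
    by_contra hneg
    rw [ENNReal.ofReal_of_nonpos (not_lt.1 hneg), nonpos_iff_eq_zero,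
      lintegral_eq_zero_iff (by
        have := (Fb_cont d k hk).measurable
        fun_prop)] at hM
    have h1 : ∀ᵐ r ∂(volume.restrict (Set.Ioo (0:ℝ) 1)), False := by
      have h2 := ae_restrict_of_ae_restrict_of_subset
        (Set.Ioo_subset_Ioi_self : Set.Ioo (0:ℝ) 1 ⊆ Set.Ioi 0) hM
      filter_upwards [h2, ae_restrict_mem measurableSet_Ioo] with r hr hr1
      simp only [Pi.zero_apply, ENNReal.ofReal_eq_zero] at hr
      have hlt : Fb d k r < 1 := by
        unfold Fb
        rw [div_lt_one hB, min_eq_left hr1.2.le]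
        have e := intervalIntegral.integral_add_adjacent_intervals
          (phi_int d k hk 0 r) (phi_int d k hk r 1)
        have := phi_integral_pos d k hk hr1.1.le hr1.2 le_rfl
        linarith
      have := pow_lt_one₀ (Fb_nonneg d k hr1.1.le) hlt (n := d+k) (by omega)
      linarith
    rw [Filter.eventually_false_iff_eq_bot, ae_eq_bot, Measure.restrict_eq_zero] at h1
    simp at h1
  have : Nonempty (Fin (d+k)) := ⟨⟨0, by omega⟩⟩
  have hrow : ∀ i : Fin (d+k), μ {U | M + t ≤ rowNorm U i} *
      ENNReal.ofReal (∫ u in (0:ℝ)..1, phi d k u) =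
      ∫⁻ ρ in Set.Ioo (0:ℝ) 1, ENNReal.ofReal (phi d k ρ) * (Set.Ici (M+t)).indicator 1 ρ := by
    intro i
    have h := row_dist d k (by omega) hk μ hsupp hinv i ((Set.Ici (M+t)).indicator 1)
      (measurable_one.indicator measurableSet_Ici)
    rw [lphi_full d k hk] at h
    rw [← h]
    congr 1
    have hms : MeasurableSet {U : Matrix (Fin (d+k)) (Fin d) ℝ | M + t ≤ rowNorm U i} :=
      measurableSet_le measurable_const (meas_rowNorm i)
    rw [← lintegral_indicator_one hms]
    rfl
  have hun : μ {U : Matrix (Fin (d+k)) (Fin d) ℝ | M + t ≤ ⨆ i, rowNorm U i} ≤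
      ∑ i : Fin (d+k), μ {U | M + t ≤ rowNorm U i} := by
    refine le_trans (measure_mono ?_) (measure_iUnion_fintype_le μ _)
    intro U hU
    obtain ⟨i, hi⟩ := exists_eq_ciSup_of_finite (f := fun i => rowNorm U i)
    refine Set.mem_iUnion.2 ⟨i, ?_⟩
    change M + t ≤ rowNorm U i
    have hU : M + t ≤ ⨆ i, rowNorm U i := hU
    rw [hi]; exact hU
  refine hun.trans ?_
  have hB0 : ENNReal.ofReal (∫ u in (0:ℝ)..1, phi d k u) ≠ 0 := by simpa using hB
  by_cases h1 : M + t ≤ 1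
  · have hm1 : M < 1 := by linarith
    have hmean := Fb_mean d k hk hM0 hm1 hM
    have htail := phi_tail d k hd hk hM0 hm1 ht.le h1 hmean
    have htn : 0 ≤ ∫ u in (M+t)..1, phi d k u :=
      intervalIntegral.integral_nonneg h1 (fun x hx => phi_nonneg d k (by linarith [hx.1]) hx.2)
    rw [← ENNReal.mul_le_mul_iff_left hB0 ENNReal.ofReal_ne_top, Finset.sum_mul,
      ← ENNReal.ofReal_mul (Real.exp_pos _).le]
    calc _ ≤ ∑ i : Fin (d+k), ENNReal.ofReal (∫ u in (M+t)..1, phi d k u) := by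
          refine Finset.sum_le_sum fun i _ => ?_
          rw [hrow i]
          exact lphi_tail d k hk (by linarith) h1
      _ = ENNReal.ofReal (((d:ℝ)+k) * ∫ u in (M+t)..1, phi d k u) := by
          rw [Finset.sum_const, Finset.card_univ, Fintype.card_fin, nsmul_eq_mul,
            ENNReal.ofReal_mul (by positivity)]
          congr 1
          rw [← Nat.cast_add, ENNReal.ofReal_natCast]
      _ ≤ _ := ENNReal.ofReal_le_ofReal htail
  · have hz : ∀ i : Fin (d+k), μ {U | M + t ≤ rowNorm U i} = 0 := by
      intro i
      have h := hrow i
      have hzero : ∫⁻ ρ in Set.Ioo (0:ℝ) 1,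
          ENNReal.ofReal (phi d k ρ) * (Set.Ici (M+t)).indicator 1 ρ = 0 := by
        rw [setLIntegral_congr_fun (g := fun _ => 0) measurableSet_Ioo]
        · simp
        · intro ρ hρ
          have : ρ ∉ Set.Ici (M+t) := by
            intro h; have h : M + t ≤ ρ := h; linarith [hρ.2]
          simp [this]
      rw [hzero] at h
      exact (mul_eq_zero.1 h).resolve_right hB0
    simp [hz]

/-- **Sharper concentration over the Stiefel manifold.**
Let `μ` be the symmetric measure on the Stiefel manifold `St(n,d) = {U : Uᵀ U = I_d}`,
characterized as a probability measure on `n × d` matrices supported on `St(n,d)` and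
invariant under left multiplication by every orthogonal `n × n` matrix. If `d ≥ 2`,
`n > d + 1` and `ε > 0` satisfies `K < ε`, then
`ℙ(max_i ‖u_i‖ - √(d/n) ≥ ε) ≤ exp(-(n-2)(ε-K)²/8)`. -/
theorem stiefel_concentration_sharp
    (d n : ℕ) (hd : 2 ≤ d) (hn : d + 1 < n)
    (μ : Measure (Matrix (Fin n) (Fin d) ℝ)) [IsProbabilityMeasure μ]
    (hsupp : μ {U : Matrix (Fin n) (Fin d) ℝ | Uᵀ * U = 1} = 1)
    (hinv : ∀ Q : Matrix (Fin n) (Fin n) ℝ, Qᵀ * Q = 1 →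
      Measure.map (fun U => Q * U) μ = μ)
    (ε : ℝ) (hε : 0 < ε) (hK : stiefelK d n < ε) :
    μ {U : Matrix (Fin n) (Fin d) ℝ |
        ε ≤ (⨆ i : Fin n, rowNorm U i) - Real.sqrt ((d : ℝ) / n)}
      ≤ ENNReal.ofReal
          (Real.exp (-((n - 2) * (ε - stiefelK d n) ^ 2) / 8)) := by
  obtain ⟨k, rfl⟩ : ∃ k, n = d + k := ⟨n - d, by omega⟩
  have hk : 2 ≤ k := by omega
  have h := main_aux d k hd hk μ hsupp hinv _ (ε - stiefelK d (d+k)) (by linarith)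
    (mean_le d k hd hk)
  refine (measure_mono ?_).trans (h.trans (le_of_eq ?_))
  · intro U hU
    have hU : ε ≤ (⨆ i : Fin (d+k), rowNorm U i) - √((d : ℝ) / ((d+k:ℕ):ℝ)) := hU
    change stiefelK d (d+k) + √((d:ℝ)/((d+k:ℕ):ℝ)) + (ε - stiefelK d (d+k)) ≤
      ⨆ i, rowNorm U i
    linarith
  · congr 2
    push_cast
    ring
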